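/- There exist ε₀ ∈ (0, π/6) and a constant c > 0 such that for every ε ∈ (0, ε₀), every r₀ ∈ (1, √2), every pair of potentials v₂, v₃ satisfying assumptions (i₂)–(iii₂) and (i₃)–(iv₃), every integer n ≥ 1, and every configuration C_n of n distinct points in ℝ² minimizing the energy F among all n-point configurations, there is a rigid motion (isometry) R of ℝ² such that #(R(C_n) Δ S_n) ≤ c·n^{3/4}, where S_n = ([1, ⌈√n⌉] × [1, ⌈√n⌉]) ∩ ℤ² and Δ denotes symmetric difference. -/

import Mathlib

open scoped Real

noncomputable section

abbrev Pt : Type := EuclideanSpace ℝ (Fin 2)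

/-- The clockwise angle in `[0, 2π)` between the vectors `u` and `v`. -/
noncomputable def cwAngle (u v : Pt) : ℝ :=
  let a := Complex.arg ((⟨u 0, u 1⟩ : ℂ) * (starRingEnd ℂ) (⟨v 0, v 1⟩ : ℂ))
  if a < 0 then a + 2 * π else a

/-- Assumptions (i₂)–(iii₂) on the two-body potential. -/
structure V2Hyp (ε r0 : ℝ) (v2 : ℝ → EReal) : Prop where
  eq_neg_one : v2 1 = -1
  ge_neg_one : ∀ r : ℝ, 0 ≤ r → -1 ≤ v2 r
  gt_neg_one : ∀ r : ℝ, 0 ≤ r → r ≠ 1 → -1 < v2 r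
  eq_zero : ∀ r : ℝ, r0 ≤ r → v2 r = 0
  repulsive : ∀ r : ℝ, 0 ≤ r → r ≤ 1 - ε → ((ε⁻¹ : ℝ) : EReal) < v2 r

/-- Assumptions (i₃)–(iv₃) on the three-body potential. -/
structure V3Hyp (ε : ℝ) (v3 : ℝ → ℝ) : Prop where
  symm : ∀ θ : ℝ, 0 ≤ θ → θ ≤ 2 * π → v3 θ = v3 (2 * π - θ)
  zero_pi_half : v3 (π / 2) = 0
  zero_pi : v3 π = 0
  zero_three_pi_half : v3 (3 * π / 2) = 0
  pos : ∀ θ : ℝ, 0 ≤ θ → θ ≤ 2 * π → θ ∉ ({π / 2, π, 3 * π / 2} : Set ℝ) → 0 < v3 θ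
  slope : ∀ θ ∈ Set.Icc (π - ε) (π + ε), 4 * (π / 6 - ε)⁻¹ * |θ - π| ≤ v3 θ
  slope_eq : ∀ θ ∈ Set.Icc (π - ε) (π + ε), v3 θ = 4 * (π / 6 - ε)⁻¹ * |θ - π| → θ = π
  large : ∀ θ : ℝ, 0 ≤ θ → θ ≤ 2 * π →
    θ ∉ Set.Icc (π / 2 - ε) (π / 2 + ε) ∪ Set.Icc (π - ε) (π + ε) ∪
        Set.Icc (3 * π / 2 - ε) (3 * π / 2 + ε) →
    4 / (1 - ε) ^ 2 * (Real.sqrt 2 + 1 / 2) ^ 2 < v3 θ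

/-- The configurational energy `F(C_n)`. -/
noncomputable def energy (r0 : ℝ) (v2 : ℝ → EReal) (v3 : ℝ → ℝ) {n : ℕ}
    (x : Fin n → Pt) : EReal :=
  ((1 / 2 : ℝ) : EReal) *
      ∑ i : Fin n, ∑ j : Fin n, (if j ≠ i then v2 (dist (x i) (x j)) else 0)
    + (((1 / 2 : ℝ) * ∑ i : Fin n, ∑ j : Fin n, ∑ k : Fin n,
        (if i ≠ j ∧ i ≠ k ∧ j ≠ k ∧ dist (x i) (x j) ≤ r0 ∧ dist (x i) (x k) ≤ r0
          then v3 (cwAngle (x j - x i) (x k - x i)) else 0) : ℝ) : EReal)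

/-- `x` is an `n`-point configuration of minimal energy. -/
def IsMinimizer (r0 : ℝ) (v2 : ℝ → EReal) (v3 : ℝ → ℝ) {n : ℕ} (x : Fin n → Pt) : Prop :=
  Function.Injective x ∧
    ∀ y : Fin n → Pt, Function.Injective y → energy r0 v2 v3 x ≤ energy r0 v2 v3 y


open scoped symmDiff

/-- The square `S_n = ([1, ⌈√n⌉] × [1, ⌈√n⌉]) ∩ ℤ²` viewed inside `ℝ²`. -/
def Sn (n : ℕ) : Set Pt :=
  {p | ∃ a b : ℤ, 1 ≤ a ∧ a ≤ ⌈Real.sqrt n⌉ ∧ 1 ≤ b ∧ b ≤ ⌈Real.sqrt n⌉ ∧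
    p 0 = (a : ℝ) ∧ p 1 = (b : ℝ)}

/-! ### Averaging over thresholds -/

lemma integral_floor_add (α : ℝ) :
    ∫ s in (0 : ℝ)..1, ((⌊α + s⌋ : ℤ) : ℝ) = α + ∫ s in (0 : ℝ)..1, (s - Int.fract s) := by
  have hfr : ∀ a b : ℝ, IntervalIntegrable (fun s : ℝ => Int.fract s) MeasureTheory.volume a b := by
    intro a b
    refine (intervalIntegrable_const (c := (1 : ℝ))).mono_fun
      measurable_fract.aestronglyMeasurable (Filter.Eventually.of_forall fun s => ?_)
    simp only [Real.norm_eq_abs, abs_of_nonneg (Int.fract_nonneg s), abs_one]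
    exact (Int.fract_lt_one s).le
  have hper : Function.Periodic (fun s : ℝ => Int.fract s) 1 := fun s => Int.fract_add_one s
  have h1 : ∫ s in (0 : ℝ)..1, Int.fract (α + s) = ∫ s in (0 : ℝ)..1, Int.fract s := by
    rw [intervalIntegral.integral_comp_add_left (fun s : ℝ => Int.fract s) α]
    simpa using hper.intervalIntegral_add_eq α 0
  have h2 : ∀ s : ℝ, ((⌊α + s⌋ : ℤ) : ℝ) = (α + s) - Int.fract (α + s) := fun s => by
    rw [Int.self_sub_fract]
  simp_rw [h2]
  have hfr' : IntervalIntegrable (fun s : ℝ => Int.fract (α + s)) MeasureTheory.volume 0 1 := by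
    simpa using (hfr (α + 0) (α + 1)).comp_add_left α
  have hid : IntervalIntegrable (fun s : ℝ => s) MeasureTheory.volume 0 1 :=
    continuous_id.intervalIntegrable _ _
  rw [intervalIntegral.integral_sub (intervalIntegrable_const.add hid) hfr', h1,
    intervalIntegral.integral_sub hid (hfr 0 1),
    intervalIntegral.integral_add intervalIntegrable_const hid]
  simp
  ring

lemma intervalIntegrable_floor_add (α : ℝ) :
    IntervalIntegrable (fun s : ℝ => ((⌊α + s⌋ : ℤ) : ℝ)) MeasureTheory.volume 0 1 := by
  have : Monotone (fun s : ℝ => ((⌊α + s⌋ : ℤ) : ℝ)) := fun s t h =>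
    Int.cast_le.2 (Int.floor_mono (add_le_add_right h α))
  exact this.intervalIntegrable

lemma abs_floor_sub_eq {α β : ℝ} (h : α ≤ β) (s : ℝ) :
    |((⌊α + s⌋ : ℤ) : ℝ) - ⌊β + s⌋| = (⌊β + s⌋ : ℝ) - ⌊α + s⌋ := by
  rw [abs_sub_comm, abs_of_nonneg]
  have : ⌊α + s⌋ ≤ ⌊β + s⌋ := Int.floor_mono (by linarith)
  rw [sub_nonneg]
  exact_mod_cast this

lemma intervalIntegrable_abs_floor_sub (α β : ℝ) :
    IntervalIntegrable (fun s : ℝ => |((⌊α + s⌋ : ℤ) : ℝ) - ⌊β + s⌋|) MeasureTheory.volume 0 1 :=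
  ((intervalIntegrable_floor_add α).sub (intervalIntegrable_floor_add β)).abs

lemma integral_abs_floor_sub (α β : ℝ) :
    ∫ s in (0 : ℝ)..1, |((⌊α + s⌋ : ℤ) : ℝ) - ⌊β + s⌋| = |α - β| := by
  wlog h : α ≤ β generalizing α β
  · rw [abs_sub_comm α β, ← this β α (le_of_not_ge h)]
    simp_rw [abs_sub_comm]
  simp_rw [abs_floor_sub_eq h]
  rw [intervalIntegral.integral_sub (intervalIntegrable_floor_add β)
    (intervalIntegrable_floor_add α), integral_floor_add, integral_floor_add, abs_sub_comm,
    abs_of_nonneg (sub_nonneg.2 h)]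
  ring

/-- Some common shift makes the integer parts of two finite families differ, in `ℓ¹`, by at most
the `ℓ¹` distance of the families. -/
lemma exists_sum_abs_floor_sub_le {κ : Type*} (t : Finset κ) (α β : κ → ℝ) :
    ∃ s : ℝ, ∑ k ∈ t, |((⌊α k + s⌋ : ℤ) : ℝ) - ⌊β k + s⌋| ≤ ∑ k ∈ t, |α k - β k| := by
  by_contra! hcon
  have hdiff : ∫ s in (0 : ℝ)..1, ∑ k ∈ t, |((⌊α k + s⌋ : ℤ) : ℝ) - ⌊β k + s⌋|
      = ∑ k ∈ t, |α k - β k| := by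
    rw [intervalIntegral.integral_finsetSum
      (fun k _ => intervalIntegrable_abs_floor_sub (α k) (β k))]
    exact Finset.sum_congr rfl fun k _ => integral_abs_floor_sub _ _
  have hii : IntervalIntegrable
      (fun s : ℝ => ∑ k ∈ t, |((⌊α k + s⌋ : ℤ) : ℝ) - ⌊β k + s⌋|) MeasureTheory.volume 0 1 := by
    simpa [Finset.sum_fn] using IntervalIntegrable.sum t
      (f := fun k (s : ℝ) => |((⌊α k + s⌋ : ℤ) : ℝ) - ⌊β k + s⌋|)
      (fun k _ => intervalIntegrable_abs_floor_sub (α k) (β k))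
  have hpos : 0 < ∫ s in (0 : ℝ)..1,
      ((∑ k ∈ t, |((⌊α k + s⌋ : ℤ) : ℝ) - ⌊β k + s⌋|) - ∑ k ∈ t, |α k - β k|) :=
    intervalIntegral.intervalIntegral_pos_of_pos_on (hii.sub intervalIntegrable_const)
      (fun s _ => sub_pos.2 (hcon s)) one_pos
  rw [intervalIntegral.integral_sub hii intervalIntegrable_const, hdiff] at hpos
  simp at hpos

/-- In a symmetric nonnegative array, disjointly placed entries can be counted twice. -/
lemma two_mul_sum_le_sum_sum {ι : Type*} [Fintype ι] [DecidableEq ι] (A : ι → ι → ℝ)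
    (hA : ∀ j k, 0 ≤ A j k) (hsymm : ∀ j k, A j k = A k j) (K : Finset ι) (g : ι → ι)
    (hg : ∀ k ∈ K, g k ∉ K) : 2 * ∑ k ∈ K, A (g k) k ≤ ∑ j, ∑ k, A j k := by
  have h1 : ∑ k ∈ K, A (g k) k = ∑ j, ∑ k, if k ∈ K ∧ j = g k then A j k else 0 := by
    rw [Finset.sum_comm]
    simp [ite_and]
  have h2 : ∑ k ∈ K, A (g k) k = ∑ j, ∑ k, if j ∈ K ∧ k = g j then A j k else 0 := by
    rw [h1, Finset.sum_comm]
    simp_rw [hsymm]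
  rw [two_mul]
  nth_rewrite 1 [h1]
  rw [h2, ← Finset.sum_add_distrib]
  refine Finset.sum_le_sum fun j _ => ?_
  rw [← Finset.sum_add_distrib]
  refine Finset.sum_le_sum fun k _ => ?_
  by_cases hk : k ∈ K ∧ j = g k
  · have : ¬ (j ∈ K ∧ k = g j) := fun h => hg k hk.1 (hk.2 ▸ h.1)
    rw [if_pos hk, if_neg this, add_zero]
  · rw [if_neg hk, zero_add]
    split_ifs
    · exact le_rfl
    · exact hA j k

/-! ### Directions in the plane -/

/-- The real inner product of two complex numbers. -/
def dot (u v : ℂ) : ℝ := u.re * v.re + u.im * v.im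

/-- Two directions that are almost perpendicular or almost opposite. -/
def GoodPair (u v : ℂ) : Prop := |dot u v| ≤ 1 / 100 ∨ ‖u + v‖ ≤ 1 / 100

/-- The unit direction from `z` to `w`. -/
noncomputable def dir (z w : ℂ) : ℂ := (w - z) / (‖w - z‖ : ℂ)

lemma norm_dir {z w : ℂ} (h : z ≠ w) : ‖dir z w‖ = 1 := by
  have : ‖w - z‖ ≠ 0 := norm_ne_zero_iff.2 (sub_ne_zero.2 h.symm)
  simp [dir, this]

lemma dir_swap (z w : ℂ) : dir w z = -dir z w := by
  unfold dir
  rw [norm_sub_rev, ← neg_sub w z, neg_div]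

lemma norm_mul_dir {z w : ℂ} (h : z ≠ w) : (‖w - z‖ : ℂ) * dir z w = w - z := by
  have : (‖w - z‖ : ℂ) ≠ 0 := by exact_mod_cast norm_ne_zero_iff.2 (sub_ne_zero.2 h.symm)
  unfold dir
  field_simp

lemma sq_norm_eq (u : ℂ) : ‖u‖ ^ 2 = u.re ^ 2 + u.im ^ 2 := by
  rw [Complex.sq_norm, Complex.normSq_apply]; ring

lemma re_sq_add_im_sq {u : ℂ} (h : ‖u‖ = 1) : u.re ^ 2 + u.im ^ 2 = 1 := by
  rw [← sq_norm_eq, h, one_pow]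

lemma sq_norm_sub {u v : ℂ} (hu : ‖u‖ = 1) (hv : ‖v‖ = 1) : ‖u - v‖ ^ 2 = 2 - 2 * dot u v := by
  have := re_sq_add_im_sq hu
  have := re_sq_add_im_sq hv
  rw [sq_norm_eq, dot]
  simp only [Complex.sub_re, Complex.sub_im]
  linarith

lemma sq_norm_add {u v : ℂ} (hu : ‖u‖ = 1) (hv : ‖v‖ = 1) : ‖u + v‖ ^ 2 = 2 + 2 * dot u v := by
  have := re_sq_add_im_sq hu
  have := re_sq_add_im_sq hv
  rw [sq_norm_eq, dot]
  simp only [Complex.add_re, Complex.add_im]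
  linarith

lemma sq_norm_sq_sub_sq {u v : ℂ} (hu : ‖u‖ = 1) (hv : ‖v‖ = 1) :
    ‖u ^ 2 - v ^ 2‖ ^ 2 = 4 * (1 - dot u v ^ 2) := by
  rw [sq_sub_sq, norm_mul, mul_pow, sq_norm_add hu hv, sq_norm_sub hu hv]; ring

lemma sq_norm_sq_add_sq {u v : ℂ} (hu : ‖u‖ = 1) (hv : ‖v‖ = 1) :
    ‖u ^ 2 + v ^ 2‖ ^ 2 = 4 * dot u v ^ 2 := by
  have h := re_sq_add_im_sq hu
  have h' := re_sq_add_im_sq hv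
  have h1 : ‖u ^ 2 + v ^ 2‖ ^ 2 + ‖u ^ 2 - v ^ 2‖ ^ 2 = 4 := by
    have := parallelogram_law_with_norm ℝ (u ^ 2) (v ^ 2)
    simp only [norm_pow, hu, hv] at this
    nlinarith
  rw [sq_norm_sq_sub_sq hu hv] at h1
  linarith

lemma norm_sq_add_sq {u v : ℂ} (hu : ‖u‖ = 1) (hv : ‖v‖ = 1) :
    ‖u ^ 2 + v ^ 2‖ = 2 * |dot u v| := by
  have := sq_norm_sq_add_sq hu hv
  rw [← sq_abs (dot u v)] at this
  exact (sq_eq_sq₀ (norm_nonneg _) (by positivity)).1 (by rw [this]; ring)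

lemma norm_sq_sub_sq_le {u v : ℂ} (hu : ‖u‖ = 1) (hv : ‖v‖ = 1) :
    ‖u ^ 2 - v ^ 2‖ ≤ 2 * ‖u + v‖ := by
  rw [sq_sub_sq, norm_mul]
  have := norm_sub_le u v
  nlinarith [norm_nonneg (u + v)]

lemma dot_comm (u v : ℂ) : dot u v = dot v u := by unfold dot; ring

lemma dot_neg_left (u v : ℂ) : dot (-u) v = -dot u v := by
  simp only [dot, Complex.neg_re, Complex.neg_im]; ring

lemma dot_add_left (u u' v : ℂ) : dot (u + u') v = dot u v + dot u' v := by
  simp only [dot, Complex.add_re, Complex.add_im]; ring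

lemma dot_ofReal_mul_left (t : ℝ) (u v : ℂ) : dot (t * u) v = t * dot u v := by
  simp only [dot, Complex.mul_re, Complex.mul_im, Complex.ofReal_re, Complex.ofReal_im]; ring

lemma abs_dot_le (u v : ℂ) : |dot u v| ≤ ‖u‖ * ‖v‖ := by
  rw [← sq_le_sq₀ (abs_nonneg _) (by positivity), sq_abs, mul_pow, sq_norm_eq, sq_norm_eq, dot]
  nlinarith [sq_nonneg (u.re * v.im - u.im * v.re)]

lemma not_goodPair_of_dot {u v : ℂ} (hu : ‖u‖ = 1) (hv : ‖v‖ = 1) (h : 1 / 10 < dot u v) :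
    ¬ GoodPair u v := by
  rintro (h' | h')
  · linarith [(abs_le.1 h').2]
  · have := sq_norm_add hu hv
    nlinarith [norm_nonneg (u + v)]

lemma not_goodPair_of_norm_sub {u v : ℂ} (hu : ‖u‖ = 1) (hv : ‖v‖ = 1) (h : ‖u - v‖ ≤ 1 / 10) :
    ¬ GoodPair u v := by
  refine not_goodPair_of_dot hu hv ?_
  have := sq_norm_sub hu hv
  nlinarith [norm_nonneg (u - v)]

/-- The plane has no room for a third direction almost perpendicular to two almost perpendicular
ones. -/
lemma not_three_perp {u v w : ℂ} (hu : ‖u‖ = 1) (hv : ‖v‖ = 1) (hw : ‖w‖ = 1)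
    (huv : |dot u v| ≤ 1 / 100) (huw : |dot u w| ≤ 1 / 100) (hvw : |dot v w| ≤ 1 / 100) :
    False := by
  have h1 := norm_sq_add_sq hu hv
  have h2 := norm_sq_add_sq hu hw
  have h3 := norm_sq_add_sq hv hw
  have h4 : ‖(u ^ 2 + v ^ 2) + (u ^ 2 + w ^ 2) - (v ^ 2 + w ^ 2)‖ = 2 := by
    rw [show (u ^ 2 + v ^ 2) + (u ^ 2 + w ^ 2) - (v ^ 2 + w ^ 2) = 2 * u ^ 2 by ring]
    simp [hu]
  have h5 := norm_sub_le ((u ^ 2 + v ^ 2) + (u ^ 2 + w ^ 2)) (v ^ 2 + w ^ 2)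
  have h6 := norm_add_le (u ^ 2 + v ^ 2) (u ^ 2 + w ^ 2)
  linarith

/-- The directions of a vertex with pairwise good bonds distribute over two almost perpendicular
axes, and each axis that is used is the direction of some bond. -/
lemma exists_axes {ι : Type*} (P : ι → Prop) (e : ι → ℂ) (he : ∀ j, P j → ‖e j‖ = 1)
    (hgood : ∀ j k, P j → P k → j ≠ k → GoodPair (e j) (e k)) :
    ∃ (a : Bool → ℂ) (s : ι → Bool), (∀ b, ‖a b‖ = 1) ∧ |dot (a false) (a true)| ≤ 1 / 100 ∧
      ∀ j, P j → (e j = a (s j) ∨ ‖e j + a (s j)‖ ≤ 1 / 100) ∧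
        ∃ k, P k ∧ s k = s j ∧ e k = a (s j) := by
  classical
  have hI : ∀ u : ℂ, dot u (Complex.I * u) = 0 := fun u => by simp [dot]; ring
  by_cases h0 : ∃ j, P j
  swap
  · push Not at h0
    refine ⟨fun b => cond b (Complex.I * 1) 1, fun _ => false, fun b => ?_, ?_,
      fun j hj => absurd hj (h0 j)⟩
    · cases b <;> simp
    · simp [dot]
  obtain ⟨j0, hj0⟩ := h0
  by_cases h1 : ∃ k, P k ∧ |dot (e j0) (e k)| ≤ 1 / 100
  · obtain ⟨k0, hk0, hperp⟩ := h1
    have hne : ¬ ‖e k0 + e j0‖ ≤ 1 / 100 := fun h => by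
      have := sq_norm_add (he _ hk0) (he _ hj0)
      rw [dot_comm] at this
      nlinarith [norm_nonneg (e k0 + e j0), (abs_le.1 hperp).1]
    have hne' : e k0 ≠ e j0 := fun h => by
      have := re_sq_add_im_sq (he _ hj0)
      rw [h, dot] at hperp
      nlinarith [(abs_le.1 hperp).2]
    refine ⟨fun b => cond b (e k0) (e j0),
      fun j => if e j = e j0 ∨ ‖e j + e j0‖ ≤ 1 / 100 then false else true,
      fun b => ?_, hperp, fun j hj => ?_⟩
    · cases b
      · exact he _ hj0
      · exact he _ hk0
    · by_cases hc : e j = e j0 ∨ ‖e j + e j0‖ ≤ 1 / 100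
      · simp only [if_pos hc, cond_false]
        exact ⟨hc, j0, hj0, by simp, rfl⟩
      · simp only [if_neg hc, cond_true]
        refine ⟨?_, k0, hk0, if_neg (not_or.2 ⟨hne', hne⟩), rfl⟩
        push Not at hc
        by_cases hjk : j = k0
        · exact .inl (by rw [hjk])
        have hp : |dot (e j) (e j0)| ≤ 1 / 100 := by
          rcases hgood j j0 hj hj0 (fun h => hc.1 (by rw [h])) with h | h
          · exact h
          · exact absurd h (not_le.2 hc.2)
        rcases hgood j k0 hj hk0 hjk with h | h
        · exact (not_three_perp (he _ hj) (he _ hj0) (he _ hk0) hp h hperp).elim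
        · exact .inr h
  · push Not at h1
    refine ⟨fun b => cond b (Complex.I * e j0) (e j0), fun _ => false, fun b => ?_, ?_,
      fun j hj => ⟨?_, j0, hj0, rfl, rfl⟩⟩
    · cases b <;> simp [he _ hj0]
    · simp only [cond_false, cond_true, hI]
      norm_num
    · by_cases hjj : j = j0
      · exact .inl (by rw [hjj]; rfl)
      · rcases hgood j j0 hj hj0 hjj with h | h
        · rw [dot_comm] at h
          exact absurd h (not_le.2 (h1 j hj))
        · exact .inr h

/-- At most four directions are pairwise good. -/
lemma card_le_four_of_goodPair {ι : Type*} [DecidableEq ι] (G : Finset ι) (e : ι → ℂ)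
    (he : ∀ j ∈ G, ‖e j‖ = 1) (hgood : ∀ j ∈ G, ∀ k ∈ G, j ≠ k → GoodPair (e j) (e k)) :
    G.card ≤ 4 := by
  classical
  obtain ⟨a, s, ha, -, hs⟩ := exists_axes (· ∈ G) e he (fun j k hj hk => hgood j hj k hk)
  have : Set.InjOn (fun j => (s j, decide (e j = a (s j)))) (G : Set ι) := by
    intro j hj k hk hjk
    by_contra hne
    simp only [Prod.mk.injEq, decide_eq_decide] at hjk
    refine not_goodPair_of_norm_sub (he j hj) (he k hk) ?_ (hgood j hj k hk hne)
    by_cases hx : e j = a (s j)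
    · rw [hx, hjk.2.1 hx, hjk.1]
      norm_num
    · have h1 := (hs j hj).1.resolve_left hx
      have h2 := (hs k hk).1.resolve_left (fun h => hx (hjk.2.2 h))
      rw [← hjk.1] at h2
      have := norm_sub_le (e j + a (s j)) (e k + a (s j))
      rw [add_sub_add_right_eq_sub] at this
      linarith
  have h := Finset.card_le_card_of_injOn (t := (Finset.univ : Finset (Bool × Bool))) _
    (fun j _ => Finset.mem_univ _) this
  simpa using h

/-! ### Stratification of a bond graph -/

/-- Two axes at every vertex of a bond graph, and an assignment of the bonds to the axes. -/
structure Frame {ι : Type*} (z : ι → ℂ) (adj : ι → ι → Prop) where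
  /-- the axes -/
  axis : ι × Bool → ℂ
  /-- the axis to which the bond from `i` to `j` belongs at `i` -/
  slot : ι → ι → Bool
  adj_symm : ∀ i j, adj i j → adj j i
  ne_of_adj : ∀ i j, adj i j → z i ≠ z j
  goodPair : ∀ i j k, adj i j → adj i k → j ≠ k → GoodPair (dir (z i) (z j)) (dir (z i) (z k))
  norm_axis : ∀ p, ‖axis p‖ = 1
  dot_axis : ∀ i, |dot (axis (i, false)) (axis (i, true))| ≤ 1 / 100
  dir_eq_or : ∀ i j, adj i j → dir (z i) (z j) = axis (i, slot i j) ∨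
    ‖dir (z i) (z j) + axis (i, slot i j)‖ ≤ 1 / 100
  exists_dir_eq : ∀ i j, adj i j →
    ∃ k, adj i k ∧ slot i k = slot i j ∧ dir (z i) (z k) = axis (i, slot i j)

lemma exists_frame {ι : Type*} (z : ι → ℂ) (adj : ι → ι → Prop)
    (hsymm : ∀ i j, adj i j → adj j i) (hz : ∀ i j, adj i j → z i ≠ z j)
    (hgood : ∀ i j k, adj i j → adj i k → j ≠ k →
      GoodPair (dir (z i) (z j)) (dir (z i) (z k))) : Nonempty (Frame z adj) := by
  have h := fun i => exists_axes (adj i) (fun j => dir (z i) (z j))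
    (fun j hj => norm_dir (hz i j hj)) (hgood i)
  choose a s h1 h2 h3 using h
  exact ⟨⟨fun p => a p.1 p.2, s, hsymm, hz, hgood, fun p => h1 p.1 p.2, h2,
    fun i j hj => (h3 i j hj).1, fun i j hj => (h3 i j hj).2⟩⟩

namespace Frame

variable {ι : Type*} {z : ι → ℂ} {adj : ι → ι → Prop}

lemma norm_sq_add_sq_axis (F : Frame z adj) (i : ι) (b : Bool) :
    ‖F.axis (i, b) ^ 2 + F.axis (i, !b) ^ 2‖ ≤ 1 / 50 := by
  have h := F.dot_axis i
  have h' := norm_sq_add_sq (F.norm_axis (i, false)) (F.norm_axis (i, true))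
  cases b
  · simp only [Bool.not_false]
    linarith
  · simp only [Bool.not_true]
    rw [add_comm]
    linarith

lemma norm_dir_sq_sub_axis_sq (F : Frame z adj) {i j : ι}
    (hij : adj i j) : ‖dir (z i) (z j) ^ 2 - F.axis (i, F.slot i j) ^ 2‖ ≤ 1 / 50 := by
  rcases F.dir_eq_or i j hij with h | h
  · rw [h]; norm_num
  · have := norm_sq_sub_sq_le (norm_dir (F.ne_of_adj i j hij)) (F.norm_axis (i, F.slot i j))
    linarith

/-- A colouring of the axes compatible with their directions. -/
def IsSectorMap (F : Frame z adj) {κ : Type*} (σ : ι × Bool → κ) : Prop :=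
  ∀ p p', σ p = σ p' → ‖F.axis p ^ 2 - F.axis p' ^ 2‖ ≤ 57 / 100

/-- The bonds along which the colour of the axis is preserved. -/
def Kept (F : Frame z adj) {κ : Type*} (σ : ι × Bool → κ) (i j : ι) : Prop :=
  adj i j ∧ σ (i, F.slot i j) = σ (j, F.slot j i)

variable {κ : Type*} {σ : ι × Bool → κ}

open Classical in
/-- A reference direction for every colour. -/
noncomputable def ref (F : Frame z adj) (σ : ι × Bool → κ) (k : κ) : ℂ :=
  if h : ∃ p, σ p = k then F.axis h.choose else 1

lemma norm_ref (F : Frame z adj) (k : κ) : ‖F.ref σ k‖ = 1 := by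
  unfold ref
  split_ifs
  · exact F.norm_axis _
  · simp

lemma norm_ref_sq_sub (F : Frame z adj) (hσ : F.IsSectorMap σ) (p : ι × Bool) :
    ‖F.ref σ (σ p) ^ 2 - F.axis p ^ 2‖ ≤ 57 / 100 := by
  have h : ∃ p', σ p' = σ p := ⟨p, rfl⟩
  unfold ref
  rw [dif_pos h]
  exact hσ _ _ h.choose_spec

lemma abs_dot_dir_ref (F : Frame z adj) (hσ : F.IsSectorMap σ)
    {i j : ι} (hij : adj i j) :
    95 / 100 ≤ |dot (dir (z i) (z j)) (F.ref σ (σ (i, F.slot i j)))| := by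
  have h1 := F.norm_dir_sq_sub_axis_sq hij
  have h2 := F.norm_ref_sq_sub hσ (i, F.slot i j)
  set c := F.ref σ (σ (i, F.slot i j))
  have h3 := sq_norm_sq_sub_sq (norm_dir (F.ne_of_adj i j hij))
    (F.norm_ref (σ := σ) (σ (i, F.slot i j)))
  have h4 : ‖dir (z i) (z j) ^ 2 - c ^ 2‖ ≤ 59 / 100 := by
    have := norm_sub_le (dir (z i) (z j) ^ 2 - F.axis (i, F.slot i j) ^ 2)
      (c ^ 2 - F.axis (i, F.slot i j) ^ 2)
    rw [sub_sub_sub_cancel_right] at this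
    linarith
  refine abs_le_of_sq_le_sq' ?_ (abs_nonneg _) |>.2
  rw [sq_abs]
  nlinarith [norm_nonneg (dir (z i) (z j) ^ 2 - c ^ 2)]

/-- The successor relation on axes: follow a kept bond in the reference direction. -/
def Next (F : Frame z adj) (σ : ι × Bool → κ) (p p' : ι × Bool) : Prop :=
  F.Kept σ p.1 p'.1 ∧ p.2 = F.slot p.1 p'.1 ∧ p'.2 = F.slot p'.1 p.1 ∧
    0 < dot (dir (z p.1) (z p'.1)) (F.ref σ (σ p))

lemma Next.color_eq {F : Frame z adj} {p p' : ι × Bool} (h : F.Next σ p p') : σ p = σ p' := by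
  obtain ⟨i, b⟩ := p
  obtain ⟨j, b'⟩ := p'
  obtain ⟨h1, h2, h3, -⟩ := h
  simp only at h1 h2 h3
  subst h2 h3
  exact h1.2

/-- Two different bonds on one axis point into opposite directions. -/
lemma norm_dir_add_dir_le (F : Frame z adj) {i j k : ι} (hij : adj i j) (hik : adj i k)
    (hjk : j ≠ k) (hs : F.slot i j = F.slot i k) :
    ‖dir (z i) (z j) + dir (z i) (z k)‖ ≤ 1 / 100 := by
  have hn := not_goodPair_of_norm_sub (norm_dir (F.ne_of_adj i j hij))
    (norm_dir (F.ne_of_adj i k hik))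
  have hg := F.goodPair i j k hij hik hjk
  have hj := F.dir_eq_or i j hij
  have hk := F.dir_eq_or i k hik
  rw [← hs] at hk
  rcases hj with hj | hj <;> rcases hk with hk | hk
  · exact absurd hg (hn (by rw [hj, hk]; norm_num))
  · rwa [hj, add_comm]
  · rwa [hk]
  · refine absurd hg (hn ?_)
    have := norm_sub_le (dir (z i) (z j) + F.axis (i, F.slot i j))
      (dir (z i) (z k) + F.axis (i, F.slot i j))
    rw [add_sub_add_right_eq_sub] at this
    linarith

lemma eq_of_dot_pos (F : Frame z adj) (hσ : F.IsSectorMap σ) {i j k : ι}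
    (hij : adj i j) (hik : adj i k) (hs : F.slot i j = F.slot i k)
    (hpos : 0 < dot (dir (z i) (z j)) (F.ref σ (σ (i, F.slot i j))) *
      dot (dir (z i) (z k)) (F.ref σ (σ (i, F.slot i j)))) : j = k := by
  by_contra hjk
  have h1 := F.norm_dir_add_dir_le hij hik hjk hs
  have h2 := F.abs_dot_dir_ref hσ hij
  have h3 := F.abs_dot_dir_ref hσ hik
  rw [← hs] at h3
  have h4 := abs_dot_le (dir (z i) (z j) + dir (z i) (z k)) (F.ref σ (σ (i, F.slot i j)))
  rw [F.norm_ref, dot_add_left, mul_one] at h4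
  have h5 := abs_le.1 (h4.trans h1)
  rcases pos_and_pos_or_neg_and_neg_of_mul_pos hpos with ⟨ha, hb⟩ | ⟨ha, hb⟩
  · rw [abs_of_pos ha] at h2
    linarith
  · rw [abs_of_neg ha] at h2
    linarith

lemma next_rightUnique (F : Frame z adj) (hσ : F.IsSectorMap σ) :
    Relator.RightUnique (F.Next σ) := by
  rintro ⟨i, b⟩ ⟨j, b1⟩ ⟨k, b2⟩ ⟨h1, h2, h3, h4⟩ ⟨g1, g2, g3, g4⟩
  simp only at h1 h2 h3 h4 g1 g2 g3 g4
  have : j = k := F.eq_of_dot_pos hσ h1.1 g1.1 (h2.symm.trans g2)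
    (by rw [← h2]; exact mul_pos h4 g4)
  subst this
  rw [h3, g3]

lemma next_leftUnique (F : Frame z adj) (hσ : F.IsSectorMap σ) : Relator.LeftUnique (F.Next σ) := by
  rintro ⟨j, b1⟩ ⟨k, b2⟩ ⟨i, b⟩ h g
  have hc := h.color_eq
  have gc := g.color_eq
  obtain ⟨h1, h2, h3, h4⟩ := h
  obtain ⟨g1, g2, g3, g4⟩ := g
  simp only at h1 h2 h3 h4 g1 g2 g3 g4
  rw [hc, dir_swap, dot_neg_left] at h4
  rw [gc, dir_swap, dot_neg_left] at g4
  have : j = k := F.eq_of_dot_pos hσ (F.adj_symm _ _ h1.1) (F.adj_symm _ _ g1.1) (h3.symm.trans g3)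
    (by rw [← h3]; nlinarith)
  subst this
  rw [h2, g2]

/-- Chains stay in a cone around the reference direction. -/
lemma norm_le_dot_of_reflTransGen (F : Frame z adj) (hσ : F.IsSectorMap σ) {p p' : ι × Bool}
    (h : Relation.ReflTransGen (F.Next σ) p p') :
    σ p = σ p' ∧ 95 / 100 * ‖z p'.1 - z p.1‖ ≤ dot (z p'.1 - z p.1) (F.ref σ (σ p)) := by
  induction h with
  | refl => simp [dot]
  | tail h1 h2 ih =>
    rename_i q r
    refine ⟨ih.1.trans h2.color_eq, ?_⟩
    have hstep : 95 / 100 * ‖z r.1 - z q.1‖ ≤ dot (z r.1 - z q.1) (F.ref σ (σ p)) := by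
      rw [ih.1]
      obtain ⟨h1, h2, h3, h4⟩ := h2
      have h5 := F.abs_dot_dir_ref hσ h1.1
      rw [← h2, abs_of_pos h4] at h5
      rw [← norm_mul_dir (F.ne_of_adj _ _ h1.1), dot_ofReal_mul_left, norm_mul,
        norm_dir (F.ne_of_adj _ _ h1.1)]
      simp only [Complex.norm_real, norm_norm, mul_one]
      rw [mul_comm]
      gcongr
    have h3 := norm_add_le (z r.1 - z q.1) (z q.1 - z p.1)
    have h4 := dot_add_left (z r.1 - z q.1) (z q.1 - z p.1) (F.ref σ (σ p))
    rw [sub_add_sub_cancel] at h3 h4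
    linarith [ih.2]

lemma next_acyclic (F : Frame z adj) (hσ : F.IsSectorMap σ) {p p' : ι × Bool} (h : F.Next σ p p')
    (h' : Relation.ReflTransGen (F.Next σ) p' p) : False := by
  have h1 := (F.norm_le_dot_of_reflTransGen hσ (Relation.ReflTransGen.single h)).2
  have h2 := (F.norm_le_dot_of_reflTransGen hσ h').2
  rw [← h.color_eq, ← neg_sub, dot_neg_left, norm_neg] at h2
  have h3 : 0 < ‖z p'.1 - z p.1‖ := norm_pos_iff.2 (sub_ne_zero.2 (F.ne_of_adj _ _ h.1.1).symm)
  linarith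

/-- Every axis is connected to the end of its chain. -/
lemma exists_top (F : Frame z adj) (hσ : F.IsSectorMap σ) [Finite ι] (p : ι × Bool) :
    ∃ t, Relation.ReflTransGen (F.Next σ) p t ∧ ∀ q, ¬ F.Next σ t q := by
  have : Std.Irrefl (Relation.TransGen (fun q q' => F.Next σ q' q)) := ⟨fun q hq => by
    obtain ⟨r, hr, hr'⟩ := Relation.TransGen.head'_iff.1 (Relation.transGen_swap.1 hq)
    exact F.next_acyclic hσ hr hr'⟩
  have hwf := Finite.wellFounded_of_trans_of_irrefl
    (Relation.TransGen (fun q q' => F.Next σ q' q))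
  induction p using hwf.induction with
  | _ p ih =>
    by_cases h : ∃ q, F.Next σ p q
    · obtain ⟨q, hq⟩ := h
      obtain ⟨t, ht, ht'⟩ := ih q (.single hq)
      exact ⟨t, .head hq ht, ht'⟩
    · push Not at h
      exact ⟨p, .refl, h⟩

/-- Two different chains meet at most once. -/
lemma eq_of_crossing (F : Frame z adj) (hσ : F.IsSectorMap σ) {i j : ι} {b b' : Bool}
    {t t' : ι × Bool} (hinj : Function.Injective z)
    (h1 : Relation.ReflTransGen (F.Next σ) (i, b) t)
    (h2 : Relation.ReflTransGen (F.Next σ) (j, b') t)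
    (h3 : Relation.ReflTransGen (F.Next σ) (i, !b) t')
    (h4 : Relation.ReflTransGen (F.Next σ) (j, !b') t') : i = j := by
  by_contra hij
  have hL := F.next_leftUnique hσ
  have key : ∀ (c c' : Bool) (s : ι × Bool),
      Relation.ReflTransGen (F.Next σ) (i, c) s → Relation.ReflTransGen (F.Next σ) (j, c') s →
      95 / 100 * ‖z j - z i‖ ≤ |dot (z j - z i) (F.ref σ (σ (i, c)))| := by
    intro c c' s hs hs'
    have htot := Relation.ReflTransGen.total_of_right_unique
      (r := Function.swap (F.Next σ)) (fun a b c h h' => hL h h')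
      (Relation.reflTransGen_swap.2 hs) (Relation.reflTransGen_swap.2 hs')
    rcases htot with h | h
    · have := F.norm_le_dot_of_reflTransGen hσ (Relation.reflTransGen_swap.1 h)
      simp only at this
      rw [this.1, ← neg_sub, dot_neg_left, norm_neg] at this
      have h' := neg_abs_le (dot (z j - z i) (F.ref σ (σ (i, c))))
      linarith [this.2]
    · have := (F.norm_le_dot_of_reflTransGen hσ (Relation.reflTransGen_swap.1 h)).2
      exact this.trans (le_abs_self _)
  have hpos : 0 < ‖z j - z i‖ := norm_pos_iff.2 (sub_ne_zero.2 fun h => hij (hinj h.symm))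
  have hd : ∀ c : Bool, 95 / 100 * ‖z j - z i‖ ≤ |dot (z j - z i) (F.ref σ (σ (i, c)))| →
      ‖dir (z i) (z j) ^ 2 - F.ref σ (σ (i, c)) ^ 2‖ ≤ 63 / 100 := by
    intro c hc
    have hne : z i ≠ z j := fun h => hij (hinj h)
    rw [← norm_mul_dir hne, dot_ofReal_mul_left, norm_mul, norm_dir hne] at hc
    simp only [Complex.norm_real, norm_norm, mul_one] at hc
    rw [abs_mul, abs_of_pos hpos, mul_comm] at hc
    have hc' := le_of_mul_le_mul_left hc hpos
    have h5 := sq_norm_sq_sub_sq (norm_dir hne) (F.norm_ref (σ := σ) (σ (i, c)))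
    rw [← sq_abs (dot _ _)] at h5
    refine abs_le_of_sq_le_sq' ?_ (by norm_num) |>.2
    nlinarith
  have e1 := hd b (key b b' t h1 h2)
  have e2 := hd (!b) (key (!b) (!b') t' h3 h4)
  have e3 := F.norm_ref_sq_sub hσ (i, b)
  have e4 := F.norm_ref_sq_sub hσ (i, !b)
  have e5 := F.norm_sq_add_sq_axis i b
  set c1 := F.ref σ (σ (i, b))
  set c2 := F.ref σ (σ (i, !b))
  set V := dir (z i) (z j)
  have p := parallelogram_law_with_norm ℝ (c1 ^ 2) (c2 ^ 2)
  simp only [norm_pow, show ‖c1‖ = 1 from F.norm_ref _, show ‖c2‖ = 1 from F.norm_ref _] at p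
  have q1 : ‖c1 ^ 2 - c2 ^ 2‖ ≤ 126 / 100 := by
    have := norm_sub_le (V ^ 2 - c2 ^ 2) (V ^ 2 - c1 ^ 2)
    rw [sub_sub_sub_cancel_left] at this
    linarith
  have q2 : ‖c1 ^ 2 + c2 ^ 2‖ ≤ 116 / 100 := by
    have := norm_add₃_le (a := c1 ^ 2 - F.axis (i, b) ^ 2) (b := c2 ^ 2 - F.axis (i, !b) ^ 2)
      (c := F.axis (i, b) ^ 2 + F.axis (i, !b) ^ 2)
    rw [show c1 ^ 2 - F.axis (i, b) ^ 2 + (c2 ^ 2 - F.axis (i, !b) ^ 2) +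
      (F.axis (i, b) ^ 2 + F.axis (i, !b) ^ 2) = c1 ^ 2 + c2 ^ 2 by ring] at this
    linarith
  nlinarith [norm_nonneg (c1 ^ 2 - c2 ^ 2), norm_nonneg (c1 ^ 2 + c2 ^ 2)]

end Frame

/-- **Mantel's theorem.** -/
lemma four_mul_card_edgeFinset_le {V : Type*} [Fintype V] (H : SimpleGraph V)
    [DecidableRel H.Adj] (hH : H.CliqueFree 3) : 4 * H.edgeFinset.card ≤ Fintype.card V ^ 2 := by
  have h := hH.card_edgeFinset_le (r := 2)
  simp only at h
  have h2 : (Fintype.card V % 2).choose 2 = 0 := Nat.choose_eq_zero_of_lt (Nat.mod_lt _ two_pos)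
  rw [h2] at h
  omega

namespace Frame

variable {ι : Type*} {z : ι → ℂ} {adj : ι → ι → Prop} {κ : Type*} {σ : ι × Bool → κ}

lemma Kept.symm {F : Frame z adj} {i j : ι} (h : F.Kept σ i j) : F.Kept σ j i :=
  ⟨F.adj_symm _ _ h.1, h.2.symm⟩

lemma kept_iff_next (F : Frame z adj) (hσ : F.IsSectorMap σ) (i j : ι) :
    F.Kept σ i j ↔ F.Next σ (i, F.slot i j) (j, F.slot j i) ∨
      F.Next σ (j, F.slot j i) (i, F.slot i j) := by
  refine ⟨fun h => ?_, ?_⟩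
  · have h1 := F.abs_dot_dir_ref hσ h.1
    rcases lt_or_ge 0 (dot (dir (z i) (z j)) (F.ref σ (σ (i, F.slot i j)))) with h2 | h2
    · exact .inl ⟨h, rfl, rfl, h2⟩
    · refine .inr ⟨h.symm, rfl, rfl, ?_⟩
      rw [abs_of_nonpos h2] at h1
      simp only
      rw [dir_swap, dot_neg_left, ← h.2]
      linarith
  · rintro (h | h)
    · exact h.1
    · exact h.1.symm

lemma color_ne (F : Frame z adj) (hσ : F.IsSectorMap σ) (i : ι) (b : Bool) :
    σ (i, b) ≠ σ (i, !b) := fun h => by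
  have h1 := hσ _ _ h
  have h2 := F.norm_sq_add_sq_axis i b
  have h3 := norm_add_le (F.axis (i, b) ^ 2 - F.axis (i, !b) ^ 2)
    (F.axis (i, b) ^ 2 + F.axis (i, !b) ^ 2)
  rw [sub_add_add_cancel, ← two_mul, norm_mul, norm_pow, F.norm_axis] at h3
  norm_num at h3
  linarith

/-- Three colours cannot meet pairwise at vertices. -/
lemma color_triangle_free (F : Frame z adj) (hσ : F.IsSectorMap σ) {i j k : ι} {b c d : Bool}
    (h1 : σ (i, !b) = σ (j, c)) (h2 : σ (j, !c) = σ (k, d)) (h3 : σ (k, !d) = σ (i, b)) :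
    False := by
  have e1 := hσ _ _ h1
  have e2 := hσ _ _ h2
  have e3 := hσ _ _ h3
  have f1 := F.norm_sq_add_sq_axis i b
  have f2 := F.norm_sq_add_sq_axis j c
  have f3 := F.norm_sq_add_sq_axis k d
  have hn : ‖(2 : ℂ) * F.axis (i, b) ^ 2‖ = 2 := by simp [F.norm_axis]
  rw [show (2 : ℂ) * F.axis (i, b) ^ 2 =
      ((F.axis (i, b) ^ 2 + F.axis (i, !b) ^ 2) - (F.axis (i, !b) ^ 2 - F.axis (j, c) ^ 2))
      - ((F.axis (j, c) ^ 2 + F.axis (j, !c) ^ 2) - (F.axis (j, !c) ^ 2 - F.axis (k, d) ^ 2))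
      + ((F.axis (k, d) ^ 2 + F.axis (k, !d) ^ 2) - (F.axis (k, !d) ^ 2 - F.axis (i, b) ^ 2))
      by ring] at hn
  have := norm_add_le_of_le (norm_sub_le_of_le (norm_sub_le_of_le f1 e1)
    (norm_sub_le_of_le f2 e2)) (norm_sub_le_of_le f3 e3)
  rw [hn] at this
  norm_num at this

/-- The number `N` of chains satisfies `N ^ 2 ≥ 4 * n`, and it is `2 * n` minus the number of kept
bonds. -/
theorem exists_card_chains [Fintype ι] (F : Frame z adj) (hσ : F.IsSectorMap σ)
    (hinj : Function.Injective z) :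
    ∃ N : ℕ, 4 * Fintype.card ι ≤ N ^ 2 ∧
      Nat.card {d : ι × ι // F.Kept σ d.1 d.2} + 2 * N = 4 * Fintype.card ι := by
  classical
  choose top htop htop' using F.exists_top hσ
  let T := {t : ι × Bool // ∀ q, ¬ F.Next σ t q}
  let top' : ι × Bool → T := fun p => ⟨top p, htop' p⟩
  have hcol : ∀ p p', top' p = top' p' → σ p = σ p' := fun p p' h => by
    have h0 : top p = top p' := congrArg Subtype.val h
    rw [(F.norm_le_dot_of_reflTransGen hσ (htop p)).1,
      (F.norm_le_dot_of_reflTransGen hσ (htop p')).1, h0]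
  let H : SimpleGraph T :=
    { Adj := fun t t' => ∃ i b, top' (i, b) = t ∧ top' (i, !b) = t'
      symm := ⟨by
        rintro _ _ ⟨i, b, rfl, rfl⟩
        exact ⟨i, !b, rfl, by simp⟩⟩
      loopless := ⟨by
        rintro _ ⟨i, b, rfl, h⟩
        exact F.color_ne hσ i b (hcol _ _ h.symm)⟩ }
  have hfree : H.CliqueFree 3 := by
    intro s hs
    obtain ⟨t1, t2, t3, h12, h13, h23, -⟩ := SimpleGraph.is3Clique_iff.1 hs
    obtain ⟨i, b, hi, hi'⟩ := h12
    obtain ⟨j, c, hj, hj'⟩ := h23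
    obtain ⟨k, d, hk, hk'⟩ := h13.symm
    exact F.color_triangle_free hσ (hcol _ _ (hi'.trans hj.symm)) (hcol _ _ (hj'.trans hk.symm))
      (hcol _ _ (hk'.trans hi.symm))
  refine ⟨Fintype.card T, ?_, ?_⟩
  · refine le_trans ?_ (four_mul_card_edgeFinset_le H hfree)
    gcongr
    have hadj : ∀ i, H.Adj (top' (i, false)) (top' (i, true)) := fun i => ⟨i, false, rfl, rfl⟩
    let f : ι → H.edgeFinset := fun i =>
      ⟨s(top' (i, false), top' (i, true)), by simpa using hadj i⟩
    have hf : Function.Injective f := by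
      intro i j hij
      have h := congrArg Subtype.val hij
      simp only [f, Sym2.eq_iff] at h
      have hv : ∀ {b c : Bool}, top' (i, b) = top' (j, c) → top (i, b) = top (j, c) :=
        fun h => congrArg Subtype.val h
      rcases h with ⟨h1, h2⟩ | ⟨h1, h2⟩
      · exact F.eq_of_crossing hσ (b := false) (b' := false) hinj (htop _) (hv h1 ▸ htop _)
          (htop _) (hv h2 ▸ htop _)
      · exact F.eq_of_crossing hσ (b := false) (b' := true) hinj (htop _) (hv h1 ▸ htop _)
          (htop _) (hv h2 ▸ htop _)
    have := Fintype.card_le_of_injective f hf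
    rwa [Fintype.card_coe] at this
  · let Dp : Finset (ι × ι) :=
      {d | F.Next σ (d.1, F.slot d.1 d.2) (d.2, F.slot d.2 d.1)}
    let Dn : Finset (ι × ι) :=
      {d | F.Next σ (d.2, F.slot d.2 d.1) (d.1, F.slot d.1 d.2)}
    have h1 : Nat.card {d : ι × ι // F.Kept σ d.1 d.2} = (Dp ∪ Dn).card := by
      rw [Nat.card_eq_fintype_card, Fintype.card_subtype]
      congr 1
      ext d
      simp [Dp, Dn, F.kept_iff_next hσ]
    have hdisj : Disjoint Dp Dn := by
      rw [Finset.disjoint_left]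
      intro d hp hn
      simp only [Dp, Dn, Finset.mem_filter, Finset.mem_univ, true_and] at hp hn
      exact F.next_acyclic hσ hp (.single hn)
    have hcard : Dn.card = Dp.card := by
      refine Finset.card_bij (fun d _ => d.swap) ?_ ?_ ?_
      · intro d hd
        simpa [Dp, Dn] using hd
      · intro d _ d' _ h
        exact Prod.swap_injective h
      · intro d hd
        exact ⟨d.swap, by simpa [Dp, Dn] using hd, by simp⟩
    have himg : Dp.card = Fintype.card {p : ι × Bool // ¬ ∀ q, ¬ F.Next σ p q} := by
      rw [Fintype.card_subtype]
      refine Finset.card_bij (fun d _ => (d.1, F.slot d.1 d.2)) ?_ ?_ ?_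
      · intro d hd
        simp only [Dp, Finset.mem_filter, Finset.mem_univ, true_and] at hd ⊢
        exact fun h => h _ hd
      · rintro ⟨i, j⟩ hd ⟨i', j'⟩ hd' h
        simp only [Dp, Finset.mem_filter, Finset.mem_univ, true_and] at hd hd'
        simp only at h
        rw [h] at hd
        have := F.next_rightUnique hσ hd hd'
        simp only [Prod.mk.injEq] at this h ⊢
        exact ⟨h.1, this.1⟩
      · rintro ⟨i, b⟩ hp
        simp only [Finset.mem_filter, Finset.mem_univ, true_and] at hp
        push Not at hp
        obtain ⟨⟨j, c⟩, hq⟩ := hp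
        have hb : b = F.slot i j := hq.2.1
        have hc : c = F.slot j i := hq.2.2.1
        subst hb hc
        exact ⟨(i, j), by simpa [Dp] using hq, rfl⟩
    have hcompl := Fintype.card_subtype_compl (fun p : ι × Bool => ∀ q, ¬ F.Next σ p q)
    have hle := Fintype.card_subtype_le (fun p : ι × Bool => ∀ q, ¬ F.Next σ p q)
    have hT : Fintype.card T = Fintype.card {p : ι × Bool // ∀ q, ¬ F.Next σ p q} := rfl
    have h2n : Fintype.card (ι × Bool) = 2 * Fintype.card ι := by simp [mul_comm]
    rw [h1, Finset.card_union_of_disjoint hdisj, hcard, himg, hT]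
    omega

end Frame

namespace Frame

variable {ι : Type*} {z : ι → ℂ} {adj : ι → ι → Prop}

open Classical in
/-- The deviation of the bonds at `i` from the axes is controlled by the angular energy. -/
lemma sum_norm_axis_sq_sub_le [Fintype ι] (F : Frame z adj) (i : ι) (A : ι → ι → ℝ)
    (hA : ∀ j k, 0 ≤ A j k) (hAsymm : ∀ j k, A j k = A k j)
    (hslope : ∀ j k, adj i j → adj i k → j ≠ k → ‖dir (z i) (z j) + dir (z i) (z k)‖ ≤ 1 / 100 →
      38 / 10 * ‖dir (z i) (z j) ^ 2 - dir (z i) (z k) ^ 2‖ ≤ A j k) :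
    76 / 10 * ∑ j with adj i j, ‖F.axis (i, F.slot i j) ^ 2 - dir (z i) (z j) ^ 2‖ ≤
      ∑ j, ∑ k, A j k := by
  have hex : ∀ k, ∃ g, adj i k → adj i g ∧ F.slot i g = F.slot i k ∧
      dir (z i) (z g) = F.axis (i, F.slot i k) := fun k => by
    by_cases hk : adj i k
    · obtain ⟨g, hg⟩ := F.exists_dir_eq i k hk
      exact ⟨g, fun _ => hg⟩
    · exact ⟨k, fun h => absurd h hk⟩
  choose g hg using hex
  let K : Finset ι := {k | adj i k ∧ dir (z i) (z k) ≠ F.axis (i, F.slot i k)}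
  have hK : ∀ k, k ∈ K ↔ adj i k ∧ dir (z i) (z k) ≠ F.axis (i, F.slot i k) := by simp [K]
  have h := two_mul_sum_le_sum_sum A hA hAsymm K g (fun k hk => by
    rw [hK] at hk
    obtain ⟨h1, h2, h3⟩ := hg k hk.1
    rw [hK, h2]
    exact fun h => h.2 h3)
  have hsub : ∑ j with adj i j, ‖F.axis (i, F.slot i j) ^ 2 - dir (z i) (z j) ^ 2‖ =
      ∑ j ∈ K, ‖F.axis (i, F.slot i j) ^ 2 - dir (z i) (z j) ^ 2‖ := by
    symm
    refine Finset.sum_subset (fun j hj => by simpa using ((hK j).1 hj).1) (fun j hj hj' => ?_)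
    simp only [Finset.mem_filter, Finset.mem_univ, true_and] at hj
    have : dir (z i) (z j) = F.axis (i, F.slot i j) := by
      by_contra hne
      exact hj' ((hK j).2 ⟨hj, hne⟩)
    simp [this]
  rw [hsub]
  refine le_trans ?_ h
  rw [Finset.mul_sum, Finset.mul_sum]
  refine Finset.sum_le_sum fun k hk => ?_
  rw [hK] at hk
  obtain ⟨h1, h2, h3⟩ := hg k hk.1
  have hne : g k ≠ k := fun h' => hk.2 (by rw [h'] at h3; exact h3)
  have := hslope (g k) k h1 hk.1 hne (F.norm_dir_add_dir_le h1 hk.1 hne h2)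
  rw [h3] at this
  linarith

open Classical in
/-- A colouring of the axes that is constant along most bonds. -/
lemma exists_isSectorMap [Fintype ι] (F : Frame z adj) (D : Finset (ι × ι)) :
    ∃ σ : ι × Bool → ℤ × ℤ, F.IsSectorMap σ ∧
      ((D.filter fun d => σ (d.1, F.slot d.1 d.2) ≠ σ (d.2, F.slot d.2 d.1)).card : ℝ) ≤
        354 / 100 * ∑ d ∈ D,
          ‖F.axis (d.1, F.slot d.1 d.2) ^ 2 - F.axis (d.2, F.slot d.2 d.1) ^ 2‖ := by
  obtain ⟨s, hs⟩ := exists_sum_abs_floor_sub_le D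
    (fun d => 5 / 2 * (F.axis (d.1, F.slot d.1 d.2) ^ 2).re)
    (fun d => 5 / 2 * (F.axis (d.2, F.slot d.2 d.1) ^ 2).re)
  obtain ⟨t, ht⟩ := exists_sum_abs_floor_sub_le D
    (fun d => 5 / 2 * (F.axis (d.1, F.slot d.1 d.2) ^ 2).im)
    (fun d => 5 / 2 * (F.axis (d.2, F.slot d.2 d.1) ^ 2).im)
  refine ⟨fun p => (⌊5 / 2 * (F.axis p ^ 2).re + s⌋, ⌊5 / 2 * (F.axis p ^ 2).im + t⌋), ?_, ?_⟩
  · intro p p' h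
    obtain ⟨h1, h2⟩ := Prod.mk.inj h
    have h3 := abs_lt.1 (Int.abs_sub_lt_one_of_floor_eq_floor h1)
    have h4 := abs_lt.1 (Int.abs_sub_lt_one_of_floor_eq_floor h2)
    refine abs_le_of_sq_le_sq' ?_ (by norm_num) |>.2
    rw [sq_norm_eq, Complex.sub_re, Complex.sub_im]
    nlinarith
  · rw [Finset.card_filter, Nat.cast_sum]
    have key : ∀ d ∈ D, ((if (⌊5 / 2 * (F.axis (d.1, F.slot d.1 d.2) ^ 2).re + s⌋,
          ⌊5 / 2 * (F.axis (d.1, F.slot d.1 d.2) ^ 2).im + t⌋) ≠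
          (⌊5 / 2 * (F.axis (d.2, F.slot d.2 d.1) ^ 2).re + s⌋,
          ⌊5 / 2 * (F.axis (d.2, F.slot d.2 d.1) ^ 2).im + t⌋) then 1 else 0 : ℕ) : ℝ) ≤
        |((⌊5 / 2 * (F.axis (d.1, F.slot d.1 d.2) ^ 2).re + s⌋ : ℤ) : ℝ) -
          ⌊5 / 2 * (F.axis (d.2, F.slot d.2 d.1) ^ 2).re + s⌋| +
        |((⌊5 / 2 * (F.axis (d.1, F.slot d.1 d.2) ^ 2).im + t⌋ : ℤ) : ℝ) -
          ⌊5 / 2 * (F.axis (d.2, F.slot d.2 d.1) ^ 2).im + t⌋| := by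
      intro d _
      have hdiff : ∀ a b : ℤ, a ≠ b → (1 : ℝ) ≤ |(a : ℝ) - b| := fun a b hab => by
        exact_mod_cast Int.one_le_abs (sub_ne_zero.2 hab)
      split_ifs with hne
      · rw [Nat.cast_one]
        rw [ne_eq, Prod.mk.injEq, not_and_or] at hne
        rcases hne with hne | hne
        · have := hdiff _ _ hne
          have := abs_nonneg (((⌊5 / 2 * (F.axis (d.1, F.slot d.1 d.2) ^ 2).im + t⌋ : ℤ) : ℝ) -
            ⌊5 / 2 * (F.axis (d.2, F.slot d.2 d.1) ^ 2).im + t⌋)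
          linarith
        · have := hdiff _ _ hne
          have := abs_nonneg (((⌊5 / 2 * (F.axis (d.1, F.slot d.1 d.2) ^ 2).re + s⌋ : ℤ) : ℝ) -
            ⌊5 / 2 * (F.axis (d.2, F.slot d.2 d.1) ^ 2).re + s⌋)
          linarith
      · rw [Nat.cast_zero]; positivity
    refine (Finset.sum_le_sum key).trans ?_
    rw [Finset.sum_add_distrib]
    refine (add_le_add hs ht).trans ?_
    rw [← Finset.sum_add_distrib, Finset.mul_sum]
    refine Finset.sum_le_sum fun d _ => ?_
    rw [← mul_sub, ← mul_sub, ← Complex.sub_re, ← Complex.sub_im, abs_mul, abs_mul,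
      abs_of_pos (by norm_num : (0 : ℝ) < 5 / 2)]
    set w := F.axis (d.1, F.slot d.1 d.2) ^ 2 - F.axis (d.2, F.slot d.2 d.1) ^ 2
    have h1 := sq_norm_eq w
    rw [← sq_abs w.re, ← sq_abs w.im] at h1
    have h2 : |w.re| + |w.im| ≤ 1416 / 1000 * ‖w‖ := by
      refine abs_le_of_sq_le_sq' ?_ (by positivity) |>.2
      nlinarith [sq_nonneg (|w.re| - |w.im|), sq_nonneg ‖w‖]
    linarith

end Frame

open Classical in
/-- The number of bonds is controlled by the number of points and the angular energy. -/
theorem exists_card_adj_le {ι : Type*} [Fintype ι] {z : ι → ℂ} (hinj : Function.Injective z)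
    {adj : ι → ι → Prop} (hsymm : ∀ i j, adj i j → adj j i) (hirr : ∀ i, ¬ adj i i)
    (hgood : ∀ i j k, adj i j → adj i k → j ≠ k →
      GoodPair (dir (z i) (z j)) (dir (z i) (z k)))
    (A : ι → ι → ι → ℝ) (hA : ∀ i j k, 0 ≤ A i j k) (hAsymm : ∀ i j k, A i j k = A i k j)
    (hslope : ∀ i j k, adj i j → adj i k → j ≠ k →
      ‖dir (z i) (z j) + dir (z i) (z k)‖ ≤ 1 / 100 →
      38 / 10 * ‖dir (z i) (z j) ^ 2 - dir (z i) (z k) ^ 2‖ ≤ A i j k) :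
    ∃ N : ℕ, 4 * Fintype.card ι ≤ N ^ 2 ∧
      ((Finset.univ.filter fun d : ι × ι => adj d.1 d.2).card : ℝ) + 2 * N ≤
        4 * Fintype.card ι + 94 / 100 * ∑ i, ∑ j, ∑ k, A i j k := by
  obtain ⟨F⟩ := exists_frame z adj hsymm
    (fun i j h h' => hirr i (by rw [← hinj h'] at h; exact h)) hgood
  set D : Finset (ι × ι) := Finset.univ.filter fun d => adj d.1 d.2 with hD
  obtain ⟨σ, hσ, hcard⟩ := F.exists_isSectorMap D
  obtain ⟨N, hN, hNk⟩ := F.exists_card_chains hσ hinj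
  refine ⟨N, hN, ?_⟩
  have hkept : Nat.card {d : ι × ι // F.Kept σ d.1 d.2} =
      (D.filter fun d => σ (d.1, F.slot d.1 d.2) = σ (d.2, F.slot d.2 d.1)).card := by
    rw [Nat.card_eq_fintype_card, Fintype.card_subtype, hD, Finset.filter_filter]
    congr 1
    ext d
    rw [Finset.mem_filter, Finset.mem_filter]
    rfl
  have hsplit := Finset.card_filter_add_card_filter_not (s := D)
    (fun d => σ (d.1, F.slot d.1 d.2) = σ (d.2, F.slot d.2 d.1))
  rw [hkept] at hNk
  have hDi : ∀ f : ι → ι → ℝ, ∑ d ∈ D, f d.1 d.2 = ∑ i, ∑ j with adj i j, f i j := fun f => by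
    rw [hD, Finset.sum_filter, Fintype.sum_prod_type]
    simp only [Finset.sum_filter]
  have hsw : ∑ d ∈ D, ‖F.axis (d.2, F.slot d.2 d.1) ^ 2 - dir (z d.2) (z d.1) ^ 2‖ =
      ∑ d ∈ D, ‖F.axis (d.1, F.slot d.1 d.2) ^ 2 - dir (z d.1) (z d.2) ^ 2‖ := by
    refine Finset.sum_nbij' Prod.swap Prod.swap ?_ ?_ ?_ ?_ ?_
    · intro d hd
      simp only [hD, Finset.mem_filter, Finset.mem_univ, true_and] at hd ⊢
      exact hsymm _ _ hd
    · intro d hd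
      simp only [hD, Finset.mem_filter, Finset.mem_univ, true_and] at hd ⊢
      exact hsymm _ _ hd
    all_goals simp
  have htri : ∑ d ∈ D, ‖F.axis (d.1, F.slot d.1 d.2) ^ 2 - F.axis (d.2, F.slot d.2 d.1) ^ 2‖ ≤
      2 * ∑ d ∈ D, ‖F.axis (d.1, F.slot d.1 d.2) ^ 2 - dir (z d.1) (z d.2) ^ 2‖ := by
    rw [two_mul]
    nth_rewrite 2 [← hsw]
    rw [← Finset.sum_add_distrib]
    refine Finset.sum_le_sum fun d _ => ?_
    have := norm_sub_le (F.axis (d.1, F.slot d.1 d.2) ^ 2 - dir (z d.1) (z d.2) ^ 2)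
      (F.axis (d.2, F.slot d.2 d.1) ^ 2 - dir (z d.2) (z d.1) ^ 2)
    rw [dir_swap (z d.1) (z d.2), neg_sq, sub_sub_sub_cancel_right] at this
    rwa [dir_swap (z d.1) (z d.2), neg_sq]
  have hsum : 76 / 10 * ∑ d ∈ D, ‖F.axis (d.1, F.slot d.1 d.2) ^ 2 - dir (z d.1) (z d.2) ^ 2‖ ≤
      ∑ i, ∑ j, ∑ k, A i j k := by
    rw [hDi (fun i j => ‖F.axis (i, F.slot i j) ^ 2 - dir (z i) (z j) ^ 2‖), Finset.mul_sum]
    exact Finset.sum_le_sum fun i _ =>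
      F.sum_norm_axis_sq_sub_le i (A i) (hA i) (hAsymm i) (hslope i)
  have hpos : 0 ≤ ∑ i, ∑ j, ∑ k, A i j k :=
    Finset.sum_nonneg fun i _ => Finset.sum_nonneg fun j _ => Finset.sum_nonneg fun k _ => hA i j k
  have e1 : ((D.filter fun d => σ (d.1, F.slot d.1 d.2) = σ (d.2, F.slot d.2 d.1)).card : ℝ)
      + 2 * N = 4 * Fintype.card ι := by exact_mod_cast hNk
  have e2 : ((D.filter fun d => σ (d.1, F.slot d.1 d.2) = σ (d.2, F.slot d.2 d.1)).card : ℝ)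
      + (D.filter fun d => σ (d.1, F.slot d.1 d.2) ≠ σ (d.2, F.slot d.2 d.1)).card = D.card := by
    exact_mod_cast hsplit
  linarith

/-! ### Angles -/

/-- The point of the complex plane corresponding to a point of `ℝ²`. -/
def toC (p : Pt) : ℂ := ⟨p 0, p 1⟩

lemma toC_sub (p q : Pt) : toC (p - q) = toC p - toC q := by
  simp [toC, Complex.ext_iff]

lemma norm_toC (p : Pt) : ‖toC p‖ = ‖p‖ := by
  rw [EuclideanSpace.norm_eq, Complex.norm_def, Complex.normSq_apply, toC]
  simp [Fin.sum_univ_two, sq]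

lemma toC_injective : Function.Injective toC := fun p q h => by
  simp only [toC, Complex.mk.injEq] at h
  ext i
  fin_cases i
  · exact h.1
  · exact h.2

lemma norm_toC_sub (p q : Pt) : ‖toC q - toC p‖ = dist p q := by
  rw [← toC_sub, norm_toC, dist_comm, dist_eq_norm]

lemma cwAngle_nonneg (u v : Pt) : 0 ≤ cwAngle u v := by
  unfold cwAngle
  have := Complex.neg_pi_lt_arg (toC u * (starRingEnd ℂ) (toC v))
  have := Real.pi_pos
  simp only [toC] at *
  split_ifs <;> linarith

lemma cwAngle_le (u v : Pt) : cwAngle u v ≤ 2 * π := by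
  unfold cwAngle
  have := Complex.arg_le_pi (toC u * (starRingEnd ℂ) (toC v))
  have := Real.pi_pos
  simp only [toC] at *
  split_ifs <;> linarith

lemma V3Hyp.swap {ε : ℝ} {v3 : ℝ → ℝ} (h3 : V3Hyp ε v3) (u v : Pt) :
    v3 (cwAngle u v) = v3 (cwAngle v u) := by
  have h : cwAngle v u = cwAngle u v ∨ cwAngle v u = 2 * π - cwAngle u v := by
    unfold cwAngle
    have hc : (⟨v 0, v 1⟩ : ℂ) * (starRingEnd ℂ) (⟨u 0, u 1⟩ : ℂ) =
        (starRingEnd ℂ) ((⟨u 0, u 1⟩ : ℂ) * (starRingEnd ℂ) (⟨v 0, v 1⟩ : ℂ)) := by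
      rw [map_mul, Complex.conj_conj, mul_comm]
    rw [hc, Complex.arg_conj]
    set a := Complex.arg ((⟨u 0, u 1⟩ : ℂ) * (starRingEnd ℂ) (⟨v 0, v 1⟩ : ℂ))
    have hpi := Real.pi_pos
    by_cases h0 : a = π
    · left; simp [h0]
    rcases lt_trichotomy a 0 with h | h | h
    · right; simp [h0, h, h.not_gt]
    · left; simp [h, hpi.ne]
    · right; simp only [h0, if_false, neg_lt_zero, h, if_true, h.not_gt]; ring
  rcases h with h | h
  · rw [h]
  · rw [h, ← h3.symm _ (cwAngle_nonneg u v) (cwAngle_le u v)]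

lemma V3Hyp.nonneg {ε : ℝ} {v3 : ℝ → ℝ} (h3 : V3Hyp ε v3) {θ : ℝ} (h0 : 0 ≤ θ)
    (h1 : θ ≤ 2 * π) : 0 ≤ v3 θ := by
  by_cases h : θ ∈ ({π / 2, π, 3 * π / 2} : Set ℝ)
  · rcases h with rfl | rfl | rfl
    · exact h3.zero_pi_half.ge
    · exact h3.zero_pi.ge
    · exact h3.zero_three_pi_half.ge
  · exact (h3.pos θ h0 h1 h).le

lemma cos_cwAngle {p q r : Pt} (hq : p ≠ q) (hr : p ≠ r) :
    Real.cos (cwAngle (q - p) (r - p)) =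
      dot (dir (toC p) (toC q)) (dir (toC p) (toC r)) := by
  have hu : toC q - toC p ≠ 0 := sub_ne_zero.2 fun h => hq (toC_injective h).symm
  have hv : toC r - toC p ≠ 0 := sub_ne_zero.2 fun h => hr (toC_injective h).symm
  have h1 : Real.cos (cwAngle (q - p) (r - p)) =
      Real.cos (Complex.arg (toC (q - p) * (starRingEnd ℂ) (toC (r - p)))) := by
    unfold cwAngle
    simp only [toC]
    split_ifs
    · rw [Real.cos_add_two_pi]
    · rfl
  rw [h1, toC_sub, toC_sub, Complex.cos_arg (mul_ne_zero hu ((map_ne_zero _).2 hv)), norm_mul,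
    RCLike.norm_conj]
  unfold dot dir
  rw [Complex.div_ofReal_re, Complex.div_ofReal_re, Complex.div_ofReal_im, Complex.div_ofReal_im]
  simp only [Complex.mul_re, Complex.conj_re, Complex.conj_im]
  have := norm_ne_zero_iff.2 hu
  have := norm_ne_zero_iff.2 hv
  field_simp
  ring

/-- An angle outside the windows around `π / 2`, `π` and `3 π / 2` is expensive. -/
lemma V3Hyp.goodPair_or_large {ε : ℝ} {v3 : ℝ → ℝ} (h3 : V3Hyp ε v3) (hε : 0 < ε)
    (hε' : ε < 1 / 100) {p q r : Pt} (hq : p ≠ q) (hr : p ≠ r) :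
    (GoodPair (dir (toC p) (toC q)) (dir (toC p) (toC r)) ∧
      (‖dir (toC p) (toC q) + dir (toC p) (toC r)‖ ≤ 1 / 100 →
        38 / 10 * ‖dir (toC p) (toC q) ^ 2 - dir (toC p) (toC r) ^ 2‖ ≤
          v3 (cwAngle (q - p) (r - p)))) ∨
    14 < v3 (cwAngle (q - p) (r - p)) := by
  have hcos := cos_cwAngle hq hr
  have hu : ‖dir (toC p) (toC q)‖ = 1 := norm_dir (toC_injective.ne hq)
  have hv : ‖dir (toC p) (toC r)‖ = 1 := norm_dir (toC_injective.ne hr)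
  have h0 := cwAngle_nonneg (q - p) (r - p)
  have h2 := cwAngle_le (q - p) (r - p)
  set θ := cwAngle (q - p) (r - p)
  set e := dir (toC p) (toC q)
  set e' := dir (toC p) (toC r)
  have hadd := sq_norm_add hu hv
  have hperp : |Real.cos θ| ≤ ε → GoodPair e e' ∧ (‖e + e'‖ ≤ 1 / 100 →
      38 / 10 * ‖e ^ 2 - e' ^ 2‖ ≤ v3 θ) := fun h => by
    rw [hcos] at h
    refine ⟨Or.inl (h.trans hε'.le), fun h' => ?_⟩
    have := (abs_le.1 h).1
    nlinarith [norm_nonneg (e + e')]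
  by_cases hw : θ ∈ Set.Icc (π / 2 - ε) (π / 2 + ε) ∪ Set.Icc (π - ε) (π + ε) ∪
        Set.Icc (3 * π / 2 - ε) (3 * π / 2 + ε)
  · left
    rcases hw with (hw | hw) | hw
    · refine hperp ?_
      rw [← Real.sin_pi_div_two_sub]
      refine (Real.abs_sin_le_abs).trans (abs_le.2 ⟨?_, ?_⟩) <;> linarith [hw.1, hw.2]
    · have hle : ‖e + e'‖ ≤ |θ - π| := by
        refine abs_le_of_sq_le_sq' ?_ (abs_nonneg _) |>.2
        have := Real.one_sub_sq_div_two_le_cos (x := θ - π)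
        rw [Real.cos_sub_pi] at this
        rw [hadd, ← hcos, sq_abs]
        linarith
      have habs : |θ - π| ≤ ε := abs_le.2 ⟨by linarith [hw.1], by linarith [hw.2]⟩
      refine ⟨Or.inr (by linarith), fun _ => ?_⟩
      have h4 := h3.slope θ hw
      have h5 := norm_sq_sub_sq_le hu hv
      have hpi := Real.pi_lt_d2
      have hpi' := Real.pi_gt_three
      have h6 : 76 / 10 ≤ 4 * (π / 6 - ε)⁻¹ := by
        rw [← div_eq_mul_inv, le_div_iff₀ (by linarith)]
        linarith
      have := mul_le_mul_of_nonneg_right h6 (abs_nonneg (θ - π))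
      linarith
    · refine hperp ?_
      have : Real.cos θ = Real.sin (θ - 3 * π / 2) := by
        rw [← Real.cos_pi_div_two_sub,
          show π / 2 - (θ - 3 * π / 2) = 2 * π - θ by ring, Real.cos_two_pi_sub]
      rw [this]
      refine (Real.abs_sin_le_abs).trans (abs_le.2 ⟨?_, ?_⟩) <;> linarith [hw.1, hw.2]
  · right
    refine lt_of_le_of_lt ?_ (h3.large θ h0 h2 hw)
    have hs : (1.41 : ℝ) ≤ Real.sqrt 2 := Real.le_sqrt_of_sq_le (by norm_num)
    have h7 : 14 ≤ 4 * (Real.sqrt 2 + 1 / 2) ^ 2 := by nlinarith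
    have h8 : 4 ≤ 4 / (1 - ε) ^ 2 := by
      rw [le_div_iff₀ (by nlinarith)]
      nlinarith
    nlinarith [sq_nonneg (Real.sqrt 2 + 1 / 2)]

lemma V3Hyp.dot_eq_zero_or {ε : ℝ} {v3 : ℝ → ℝ} (h3 : V3Hyp ε v3) {p q r : Pt} (hq : p ≠ q)
    (hr : p ≠ r) (h : v3 (cwAngle (q - p) (r - p)) ≤ 0) :
    dot (dir (toC p) (toC q)) (dir (toC p) (toC r)) = 0 ∨
      dir (toC p) (toC q) + dir (toC p) (toC r) = 0 := by
  have hcos := cos_cwAngle hq hr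
  have hu : ‖dir (toC p) (toC q)‖ = 1 := norm_dir (toC_injective.ne hq)
  have hv : ‖dir (toC p) (toC r)‖ = 1 := norm_dir (toC_injective.ne hr)
  have hadd := sq_norm_add hu hv
  rw [← hcos] at hadd ⊢
  by_cases hw : cwAngle (q - p) (r - p) ∈ ({π / 2, π, 3 * π / 2} : Set ℝ)
  · rcases hw with hw | hw | hw
    · left; rw [hw, Real.cos_pi_div_two]
    · right
      rw [hw, Real.cos_pi] at hadd
      have : ‖dir (toC p) (toC q) + dir (toC p) (toC r)‖ = 0 := by
        rw [← sq_eq_zero_iff]; linarith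
      exact norm_eq_zero.1 this
    · left
      rw [hw, show 3 * π / 2 = π / 2 + π by ring, Real.cos_add_pi, Real.cos_pi_div_two, neg_zero]
  · exact absurd (h3.pos _ (cwAngle_nonneg _ _) (cwAngle_le _ _) hw) h.not_gt

section

/-! ### The energy of a configuration as a real number -/

lemma EReal.coe_sum_real {ι : Type*} (s : Finset ι) (f : ι → ℝ) :
    ((∑ i ∈ s, f i : ℝ) : EReal) = ∑ i ∈ s, (f i : EReal) := by
  classical
  induction s using Finset.induction_on with
  | empty => simp
  | insert a s ha ih => rw [Finset.sum_insert ha, Finset.sum_insert ha, EReal.coe_add, ih]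

lemma EReal.sum_ne_bot {ι : Type*} (s : Finset ι) {f : ι → EReal} (hf : ∀ i, f i ≠ ⊥) :
    ∑ i ∈ s, f i ≠ ⊥ := by
  classical
  induction s using Finset.induction_on with
  | empty => simp
  | insert a s ha ih =>
    rw [Finset.sum_insert ha]
    exact EReal.add_ne_bot_iff.2 ⟨hf a, ih⟩

lemma EReal.ne_top_of_sum_ne_top {ι : Type*} {s : Finset ι} {f : ι → EReal} (hf : ∀ i, f i ≠ ⊥)
    (h : ∑ i ∈ s, f i ≠ ⊤) {i : ι} (hi : i ∈ s) : f i ≠ ⊤ := by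
  classical
  rw [← Finset.add_sum_erase s f hi] at h
  exact ((EReal.add_ne_top_iff_ne_top₂ (hf i) (EReal.sum_ne_bot _ hf)).1 h).1

variable {n : ℕ} {ε r0 : ℝ} {v2 : ℝ → EReal} {v3 : ℝ → ℝ} {x y : Fin n → Pt}

/-- The two-body energy of a pair of points. -/
def pairEnergy (v2 : ℝ → EReal) (x : Fin n → Pt) (i j : Fin n) : ℝ :=
  if j ≠ i then (v2 (dist (x i) (x j))).toReal else 0

/-- The three-body energy of a triple of points. -/
def angleEnergy (r0 : ℝ) (v3 : ℝ → ℝ) (x : Fin n → Pt) (i j k : Fin n) : ℝ :=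
  if i ≠ j ∧ i ≠ k ∧ j ≠ k ∧ dist (x i) (x j) ≤ r0 ∧ dist (x i) (x k) ≤ r0
    then v3 (cwAngle (x j - x i) (x k - x i)) else 0

/-- The energy of a configuration of finite energy. -/
def realEnergy (r0 : ℝ) (v2 : ℝ → EReal) (v3 : ℝ → ℝ) (x : Fin n → Pt) : ℝ :=
  1 / 2 * ∑ i, ∑ j, pairEnergy v2 x i j + 1 / 2 * ∑ i, ∑ j, ∑ k, angleEnergy r0 v3 x i j k

lemma V2Hyp.ne_bot (h2 : V2Hyp ε r0 v2) {r : ℝ} (hr : 0 ≤ r) : v2 r ≠ ⊥ := fun h => by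
  have := h2.ge_neg_one r hr
  rw [h, le_bot_iff] at this
  exact absurd this (EReal.coe_ne_bot (-1))

lemma energy_eq_coe (h2 : V2Hyp ε r0 v2) (hx : ∀ i j, j ≠ i → v2 (dist (x i) (x j)) ≠ ⊤) :
    energy r0 v2 v3 x = ((realEnergy r0 v2 v3 x : ℝ) : EReal) := by
  have h : ∀ i j, (if j ≠ i then v2 (dist (x i) (x j)) else 0) =
      ((pairEnergy v2 x i j : ℝ) : EReal) := fun i j => by
    unfold pairEnergy
    split_ifs with hij
    · rw [EReal.coe_toReal (hx i j hij) (h2.ne_bot dist_nonneg)]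
    · rfl
  unfold energy realEnergy
  simp only [h, ← EReal.coe_sum_real]
  rw [EReal.coe_add, EReal.coe_mul]
  rfl

lemma IsMinimizer.ne_top (hx : IsMinimizer r0 v2 v3 x) (h2 : V2Hyp ε r0 v2)
    (hy : Function.Injective y) (hyt : ∀ i j, j ≠ i → v2 (dist (y i) (y j)) ≠ ⊤) :
    ∀ i j, j ≠ i → v2 (dist (x i) (x j)) ≠ ⊤ := by
  have h1 := hx.2 y hy
  rw [energy_eq_coe h2 hyt] at h1
  have h3 : energy r0 v2 v3 x ≠ ⊤ := (h1.trans_lt (EReal.coe_lt_top _)).ne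
  have hb : ∀ i j, (if j ≠ i then v2 (dist (x i) (x j)) else 0) ≠ ⊥ := fun i j => by
    split_ifs
    · exact h2.ne_bot dist_nonneg
    · exact EReal.zero_ne_bot
  have h4 : ∑ i : Fin n, ∑ j : Fin n, (if j ≠ i then v2 (dist (x i) (x j)) else 0) ≠ ⊤ := by
    intro h
    apply h3
    unfold energy
    rw [h, EReal.coe_mul_top_of_pos (by norm_num)]
    exact EReal.top_add_coe _
  intro i j hij
  have h5 := EReal.ne_top_of_sum_ne_top (fun i => EReal.sum_ne_bot _ (hb i)) h4
    (Finset.mem_univ i)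
  have h6 := EReal.ne_top_of_sum_ne_top (hb i) h5 (Finset.mem_univ j)
  rwa [if_pos hij] at h6

lemma pairEnergy_self (i : Fin n) : pairEnergy v2 x i i = 0 := by simp [pairEnergy]

lemma pairEnergy_comm (i j : Fin n) : pairEnergy v2 x i j = pairEnergy v2 x j i := by
  unfold pairEnergy
  rw [dist_comm]
  simp only [ne_comm]

lemma neg_one_le_pairEnergy (h2 : V2Hyp ε r0 v2)
    (hx : ∀ i j, j ≠ i → v2 (dist (x i) (x j)) ≠ ⊤) (i j : Fin n) : -1 ≤ pairEnergy v2 x i j := by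
  unfold pairEnergy
  split_ifs with hij
  · have h := h2.ge_neg_one _ (dist_nonneg (x := x i) (y := x j))
    rw [← EReal.coe_toReal (hx i j hij) (h2.ne_bot dist_nonneg)] at h
    exact EReal.coe_le_coe_iff.1 h
  · norm_num

lemma dist_eq_one_of_pairEnergy (h2 : V2Hyp ε r0 v2)
    (hx : ∀ i j, j ≠ i → v2 (dist (x i) (x j)) ≠ ⊤) {i j : Fin n} (h : pairEnergy v2 x i j ≤ -1) :
    dist (x i) (x j) = 1 := by
  unfold pairEnergy at h
  split_ifs at h with hij
  · by_contra hne
    have h' := h2.gt_neg_one _ (dist_nonneg (x := x i) (y := x j)) hne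
    rw [← EReal.coe_toReal (hx i j hij) (h2.ne_bot dist_nonneg)] at h'
    have h'' : (-1 : ℝ) < (v2 (dist (x i) (x j))).toReal := EReal.coe_lt_coe_iff.1 h'
    linarith
  · norm_num at h

lemma angleEnergy_nonneg (h3 : V3Hyp ε v3) (i j k : Fin n) : 0 ≤ angleEnergy r0 v3 x i j k := by
  unfold angleEnergy
  split_ifs
  · exact h3.nonneg (cwAngle_nonneg _ _) (cwAngle_le _ _)
  · exact le_rfl

lemma angleEnergy_comm (h3 : V3Hyp ε v3) (i j k : Fin n) :
    angleEnergy r0 v3 x i j k = angleEnergy r0 v3 x i k j := by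
  unfold angleEnergy
  rw [h3.swap]
  refine if_congr ?_ rfl rfl
  rw [ne_comm (a := j)]
  tauto

/-- Two points interact when their distance is at most `r0`. -/
def Bonded (r0 : ℝ) (x : Fin n → Pt) (i j : Fin n) : Prop := i ≠ j ∧ dist (x i) (x j) ≤ r0

lemma Bonded.symm {i j : Fin n} (h : Bonded r0 x i j) : Bonded r0 x j i :=
  ⟨h.1.symm, by rw [dist_comm]; exact h.2⟩

lemma angleEnergy_of_bonded {i j k : Fin n} (hj : Bonded r0 x i j) (hk : Bonded r0 x i k)
    (hjk : j ≠ k) : angleEnergy r0 v3 x i j k = v3 (cwAngle (x j - x i) (x k - x i)) :=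
  if_pos ⟨hj.1, hk.1, hjk, hj.2, hk.2⟩

lemma pairEnergy_of_not_bonded (h2 : V2Hyp ε r0 v2) {i j : Fin n} (h : ¬ Bonded r0 x i j) :
    pairEnergy v2 x i j = 0 := by
  unfold pairEnergy
  split_ifs with hij
  · rw [h2.eq_zero, EReal.toReal_zero]
    by_contra h'
    exact h ⟨hij.symm, (not_le.1 h').le⟩
  · rfl

/-- In a minimizer no point has positive interaction energy. -/
lemma IsMinimizer.sum_energy_le (hx : IsMinimizer r0 v2 v3 x) (h2 : V2Hyp ε r0 v2)
    (h3 : V3Hyp ε v3) (hr : r0 < 2) (hxt : ∀ i j, j ≠ i → v2 (dist (x i) (x j)) ≠ ⊤)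
    (i : Fin n) :
    ∑ j, pairEnergy v2 x i j + 1 / 2 * ∑ j, ∑ k, angleEnergy r0 v3 x i j k ≤ 0 := by
  obtain ⟨p, hp⟩ := NormedSpace.exists_lt_norm ℝ Pt (∑ j, ‖x j‖ + 2)
  have hfar : ∀ j, 2 < dist p (x j) := fun j => by
    have h1 := Finset.single_le_sum (f := fun j => ‖x j‖) (fun j _ => norm_nonneg _)
      (Finset.mem_univ j)
    have h4 := norm_sub_norm_le p (x j)
    rw [dist_eq_norm]
    linarith
  set y := Function.update x i p with hy
  have hyi : y i = p := Function.update_self _ _ _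
  have hyj : ∀ j, j ≠ i → y j = x j := fun j hj => Function.update_of_ne hj _ _
  have hdist : ∀ j, j ≠ i → 2 < dist (y i) (y j) := fun j hj => by
    rw [hyi, hyj j hj]; exact hfar j
  have hyinj : Function.Injective y := by
    intro a b hab
    by_contra hne
    by_cases ha : a = i
    · subst ha
      have := hdist b (Ne.symm hne)
      rw [hab, dist_self] at this
      linarith
    · by_cases hb : b = i
      · subst hb
        have := hdist a hne
        rw [hab, dist_self] at this
        linarith
      · rw [hyj a ha, hyj b hb] at hab
        exact hne (hx.1 hab)
  have hv : ∀ a b, b ≠ a → (a = i ∨ b = i) → v2 (dist (y a) (y b)) = 0 := by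
    intro a b hab h
    refine h2.eq_zero _ ?_
    rcases h with rfl | rfl
    · linarith [hdist b hab]
    · rw [dist_comm]; linarith [hdist a hab.symm]
  have hyt : ∀ a b, b ≠ a → v2 (dist (y a) (y b)) ≠ ⊤ := fun a b hab => by
    by_cases h : a = i ∨ b = i
    · rw [hv a b hab h]; exact EReal.zero_ne_top
    · rw [not_or] at h
      rw [hyj a h.1, hyj b h.2]
      exact hxt a b hab
  have hmin := hx.2 y hyinj
  rw [energy_eq_coe h2 hxt, energy_eq_coe h2 hyt, EReal.coe_le_coe_iff] at hmin
  have hpair : ∀ a b, pairEnergy v2 x a b = pairEnergy v2 y a b +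
      ((if a = i then pairEnergy v2 x i b else 0) +
        (if b = i then pairEnergy v2 x i a else 0)) := by
    intro a b
    by_cases hab : b = a
    · subst hab
      rw [pairEnergy_self, pairEnergy_self]
      split_ifs with h
      · subst h; rw [pairEnergy_self]; ring
      · ring
    by_cases h : a = i ∨ b = i
    · have h0 : pairEnergy v2 y a b = 0 := by
        unfold pairEnergy
        rw [if_pos hab, hv a b hab h, EReal.toReal_zero]
      rw [h0]
      rcases h with rfl | rfl
      · simp [hab]
      · rw [if_neg (Ne.symm hab), if_pos rfl, pairEnergy_comm]; ring
    · rw [not_or] at h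
      rw [if_neg h.1, if_neg h.2]
      unfold pairEnergy
      rw [hyj a h.1, hyj b h.2]; ring
  have hang : ∀ a b c, angleEnergy r0 v3 y a b c +
      (if a = i then angleEnergy r0 v3 x i b c else 0) ≤ angleEnergy r0 v3 x a b c := by
    intro a b c
    by_cases h : a = i ∨ b = i ∨ c = i
    · have h0 : angleEnergy r0 v3 y a b c = 0 := by
        unfold angleEnergy
        refine if_neg fun h' => ?_
        obtain ⟨h1, h4, h5, h6, h7⟩ := h'
        rcases h with rfl | rfl | rfl
        · linarith [hdist b h1.symm]
        · rw [dist_comm] at h6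
          linarith [hdist a h1]
        · rw [dist_comm] at h7
          linarith [hdist a h4]
      rw [h0, zero_add]
      split_ifs with ha
      · rw [ha]
      · exact angleEnergy_nonneg h3 _ _ _
    · rw [not_or, not_or] at h
      rw [if_neg h.1, add_zero]
      unfold angleEnergy
      rw [hyj a h.1, hyj b h.2.1, hyj c h.2.2]
  have s1 : ∑ a, ∑ b, pairEnergy v2 x a b = ∑ a, ∑ b, pairEnergy v2 y a b +
      2 * ∑ j, pairEnergy v2 x i j := by
    rw [Finset.sum_congr rfl fun a _ => Finset.sum_congr rfl fun b _ => hpair a b]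
    simp only [Finset.sum_add_distrib, Finset.sum_ite_eq', Finset.mem_univ, if_true]
    rw [Finset.sum_comm (f := fun a b => if a = i then pairEnergy v2 x i b else 0)]
    simp only [Finset.sum_ite_eq', Finset.mem_univ, if_true]
    ring
  have s2 : ∑ a, ∑ b, ∑ c, angleEnergy r0 v3 y a b c + ∑ b, ∑ c, angleEnergy r0 v3 x i b c ≤
      ∑ a, ∑ b, ∑ c, angleEnergy r0 v3 x a b c := by
    have h := Finset.sum_le_sum fun a (_ : a ∈ Finset.univ) =>
      Finset.sum_le_sum fun b (_ : b ∈ Finset.univ) =>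
        Finset.sum_le_sum fun c (_ : c ∈ Finset.univ) => hang a b c
    simp only [Finset.sum_add_distrib] at h
    refine le_trans (le_of_eq ?_) h
    congr 1
    symm
    rw [Finset.sum_eq_single i (fun a _ ha => by simp [ha]) (by simp)]
    simp
  unfold realEnergy at hmin
  linarith

open Classical in
/-- The angular energy at a point is at most the number of its bonds. -/
lemma IsMinimizer.half_sum_angleEnergy_le (hx : IsMinimizer r0 v2 v3 x) (h2 : V2Hyp ε r0 v2)
    (h3 : V3Hyp ε v3) (hr : r0 < 2) (hxt : ∀ i j, j ≠ i → v2 (dist (x i) (x j)) ≠ ⊤)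
    (i : Fin n) :
    1 / 2 * ∑ j, ∑ k, angleEnergy r0 v3 x i j k ≤
      ((Finset.univ.filter (Bonded r0 x i)).card : ℝ) := by
  have h := hx.sum_energy_le h2 h3 hr hxt i
  have h4 : -((Finset.univ.filter (Bonded r0 x i)).card : ℝ) ≤ ∑ j, pairEnergy v2 x i j := by
    rw [Finset.card_filter, Nat.cast_sum, ← Finset.sum_neg_distrib]
    refine Finset.sum_le_sum fun j _ => ?_
    split_ifs with hj
    · simpa using neg_one_le_pairEnergy h2 hxt i j
    · rw [pairEnergy_of_not_bonded h2 hj]; simp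
  linarith

/-- In a minimizer all bonds at a point are almost perpendicular or almost opposite. -/
theorem IsMinimizer.goodPair (hx : IsMinimizer r0 v2 v3 x) (h2 : V2Hyp ε r0 v2)
    (h3 : V3Hyp ε v3) (hε : 0 < ε) (hε' : ε < 1 / 100) (hr : r0 < 2)
    (hxt : ∀ i j, j ≠ i → v2 (dist (x i) (x j)) ≠ ⊤) {i j k : Fin n} (hj : Bonded r0 x i j)
    (hk : Bonded r0 x i k) (hjk : j ≠ k) :
    GoodPair (dir (toC (x i)) (toC (x j))) (dir (toC (x i)) (toC (x k))) ∧
      (‖dir (toC (x i)) (toC (x j)) + dir (toC (x i)) (toC (x k))‖ ≤ 1 / 100 →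
        38 / 10 * ‖dir (toC (x i)) (toC (x j)) ^ 2 - dir (toC (x i)) (toC (x k)) ^ 2‖ ≤
          angleEnergy r0 v3 x i j k) := by
  classical
  have hor := fun {j k} (hj : Bonded r0 x i j) (hk : Bonded r0 x i k) =>
    h3.goodPair_or_large hε hε' (hx.1.ne hj.1) (hx.1.ne hk.1)
  let nb := Finset.univ.filter (Bonded r0 x i)
  have hnb : ∀ j, j ∈ nb ↔ Bonded r0 x i j := by simp [nb]
  obtain ⟨G, hG, hGmax⟩ := Finset.exists_max_image
    (nb.powerset.filter fun G => ∀ j ∈ G, ∀ k ∈ G, j ≠ k → angleEnergy r0 v3 x i j k ≤ 14)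
    Finset.card ⟨∅, by simp⟩
  rw [Finset.mem_filter, Finset.mem_powerset] at hG
  obtain ⟨hGn, hG⟩ := hG
  have hG4 : G.card ≤ 4 := by
    refine card_le_four_of_goodPair G (fun j => dir (toC (x i)) (toC (x j)))
      (fun j hj => norm_dir (toC_injective.ne (hx.1.ne ((hnb j).1 (hGn hj)).1))) ?_
    intro a ha b hb hab
    have hA := hG a ha b hb hab
    have ha' := (hnb a).1 (hGn ha)
    have hb' := (hnb b).1 (hGn hb)
    rw [angleEnergy_of_bonded ha' hb' hab] at hA
    exact ((hor ha' hb').resolve_right hA.not_gt).1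
  have hex : ∀ k, ∃ g, k ∈ nb \ G → g ∈ G ∧ 14 < angleEnergy r0 v3 x i g k := by
    intro k
    by_cases hk : k ∈ nb \ G
    · by_contra! hcon
      have hk' := Finset.mem_sdiff.1 hk
      have hins : insert k G ∈ nb.powerset.filter fun G =>
          ∀ j ∈ G, ∀ k ∈ G, j ≠ k → angleEnergy r0 v3 x i j k ≤ 14 := by
        rw [Finset.mem_filter, Finset.mem_powerset]
        refine ⟨Finset.insert_subset hk'.1 hGn, ?_⟩
        intro a ha b hb hab
        rcases Finset.mem_insert.1 ha with rfl | ha' <;>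
          rcases Finset.mem_insert.1 hb with rfl | hb'
        · exact absurd rfl hab
        · rw [angleEnergy_comm h3]; exact (hcon b).2 hb'
        · exact (hcon a).2 ha'
        · exact hG a ha' b hb' hab
      have := hGmax _ hins
      rw [Finset.card_insert_of_notMem hk'.2] at this
      omega
    · exact ⟨k, fun h => absurd h hk⟩
  choose g hg using hex
  have hsum := two_mul_sum_le_sum_sum (angleEnergy r0 v3 x i) (angleEnergy_nonneg h3 i)
    (angleEnergy_comm h3 i) (nb \ G) g (fun k hk h => (Finset.mem_sdiff.1 h).2 (hg k hk).1)
  have hcard : ((nb \ G).card : ℝ) * 14 ≤ ∑ k ∈ nb \ G, angleEnergy r0 v3 x i (g k) k := by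
    rw [← nsmul_eq_mul]
    exact Finset.card_nsmul_le_sum _ _ _ fun k hk => (hg k hk).2.le
  have hd := hx.half_sum_angleEnergy_le h2 h3 hr hxt i
  have hsplit : ((nb \ G).card : ℝ) + G.card = nb.card := by
    exact_mod_cast Finset.card_sdiff_add_card_eq_card hGn
  have hG4' : (G.card : ℝ) ≤ 4 := by exact_mod_cast hG4
  have hlt : ((nb \ G).card : ℝ) < 1 := by
    change _ ≤ (nb.card : ℝ) at hd
    linarith
  have h0 : nb \ G = ∅ := by
    rw [← Finset.card_eq_zero]
    have : (nb \ G).card < 1 := by exact_mod_cast hlt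
    omega
  have hsub := Finset.sdiff_eq_empty_iff_subset.1 h0
  have hA := hG j (hsub ((hnb j).2 hj)) k (hsub ((hnb k).2 hk)) hjk
  rw [angleEnergy_of_bonded hj hk hjk] at hA ⊢
  exact (hor hj hk).resolve_right hA.not_gt

end

section

/-! ### Lattice configurations -/

/-- A point of the integer lattice. -/
def latticePoint (a b : ℤ) : Pt := !₂[(a : ℝ), (b : ℝ)]

lemma latticePoint_zero (a b : ℤ) : latticePoint a b 0 = a := rfl

lemma latticePoint_one (a b : ℤ) : latticePoint a b 1 = b := rfl

lemma sq_dist_latticePoint (a b c d : ℤ) :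
    dist (latticePoint a b) (latticePoint c d) ^ 2 = (((a - c) ^ 2 + (b - d) ^ 2 : ℤ) : ℝ) := by
  rw [EuclideanSpace.dist_eq, Real.sq_sqrt (by positivity), Fin.sum_univ_two]
  simp only [latticePoint_zero, latticePoint_one, Real.dist_eq, sq_abs]
  push_cast
  ring

lemma Int.eq_unit_of_sq_add_sq_eq_one {p q : ℤ} (h : p ^ 2 + q ^ 2 = 1) :
    (p = 1 ∧ q = 0) ∨ (p = -1 ∧ q = 0) ∨ (p = 0 ∧ q = 1) ∨ (p = 0 ∧ q = -1) := by
  have hp : -1 ≤ p := by nlinarith [sq_nonneg q]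
  have hp' : p ≤ 1 := by nlinarith [sq_nonneg q]
  have hq : -1 ≤ q := by nlinarith [sq_nonneg p]
  have hq' : q ≤ 1 := by nlinarith [sq_nonneg p]
  interval_cases p <;> interval_cases q <;> simp_all

lemma V3Hyp.eq_zero_of_lattice {ε : ℝ} {v3 : ℝ → ℝ} (h3 : V3Hyp ε v3) {u v : Pt} {p q r s : ℤ}
    (hp : u 0 = p) (hq : u 1 = q) (hr : v 0 = r) (hs : v 1 = s) (hu : p ^ 2 + q ^ 2 = 1)
    (hv : r ^ 2 + s ^ 2 = 1) (hne : ¬ (p = r ∧ q = s)) : v3 (cwAngle u v) = 0 := by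
  have h1 : (⟨-1, 0⟩ : ℂ) = -1 := by simp [Complex.ext_iff]
  have h2 : (⟨0, 1⟩ : ℂ) = Complex.I := rfl
  have h4 : (⟨0, -1⟩ : ℂ) = -Complex.I := by simp [Complex.ext_iff]
  have h5 : (⟨1, 0⟩ : ℂ) = 1 := rfl
  have hpi := Real.pi_pos
  have h6 : -(π / 2) + 2 * π = 3 * π / 2 := by ring
  have h7 := h3.zero_pi_half
  have h8 := h3.zero_pi
  have h9 := h3.zero_three_pi_half
  unfold cwAngle
  rw [hp, hq, hr, hs]
  rcases Int.eq_unit_of_sq_add_sq_eq_one hu with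
    ⟨rfl, rfl⟩ | ⟨rfl, rfl⟩ | ⟨rfl, rfl⟩ | ⟨rfl, rfl⟩ <;>
  rcases Int.eq_unit_of_sq_add_sq_eq_one hv with
    ⟨rfl, rfl⟩ | ⟨rfl, rfl⟩ | ⟨rfl, rfl⟩ | ⟨rfl, rfl⟩ <;>
  simp_all [hpi.not_gt, Real.pi_div_two_pos.not_gt]

variable {n : ℕ} {ε r0 : ℝ} {v2 : ℝ → EReal} {v3 : ℝ → ℝ}

/-- Points of the lattice at distance at most `r0` are nearest neighbours. -/
lemma lattice_sq_eq_one {a b c d : ℤ} (hr : r0 < Real.sqrt 2) (hne : ¬ (a = c ∧ b = d))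
    (h : dist (latticePoint a b) (latticePoint c d) ≤ r0) : (a - c) ^ 2 + (b - d) ^ 2 = 1 := by
  have h1 := sq_dist_latticePoint a b c d
  have h2 : dist (latticePoint a b) (latticePoint c d) ^ 2 < 2 := by
    have := Real.sq_sqrt (show (0 : ℝ) ≤ 2 by norm_num)
    have := dist_nonneg (x := latticePoint a b) (y := latticePoint c d)
    nlinarith
  rw [h1] at h2
  have h4 : (a - c) ^ 2 + (b - d) ^ 2 < 2 := by exact_mod_cast h2
  have h5 : 0 < (a - c) ^ 2 + (b - d) ^ 2 := by
    by_contra h6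
    apply hne
    constructor <;> nlinarith [sq_nonneg (a - c), sq_nonneg (b - d)]
  omega

lemma v2_lattice (h2 : V2Hyp ε r0 v2) (hr : r0 < Real.sqrt 2) {a b c d : ℤ}
    (hne : ¬ (a = c ∧ b = d)) :
    v2 (dist (latticePoint a b) (latticePoint c d)) =
      (((if (a - c) ^ 2 + (b - d) ^ 2 = 1 then -1 else 0 : ℝ)) : EReal) := by
  by_cases h : (a - c) ^ 2 + (b - d) ^ 2 = 1
  · have h1 := sq_dist_latticePoint a b c d
    rw [h, Int.cast_one, pow_eq_one_iff_of_nonneg dist_nonneg two_ne_zero] at h1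
    rw [if_pos h, h1, h2.eq_neg_one]
    rfl
  · rw [if_neg h, h2.eq_zero]
    · rfl
    · by_contra h'
      exact h (lattice_sq_eq_one hr hne (not_le.1 h').le)

lemma angleEnergy_lattice (h3 : V3Hyp ε v3) (hr : r0 < Real.sqrt 2) {X Y : Fin n → ℤ}
    (hinj : ∀ i j, X i = X j ∧ Y i = Y j → i = j) (i j k : Fin n) :
    angleEnergy r0 v3 (fun i => latticePoint (X i) (Y i)) i j k = 0 := by
  unfold angleEnergy
  split_ifs with h
  · obtain ⟨h1, h4, h5, h6, h7⟩ := h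
    have e1 := lattice_sq_eq_one hr (fun h => h1 (hinj _ _ h)) h6
    have e2 := lattice_sq_eq_one hr (fun h => h4 (hinj _ _ h)) h7
    refine h3.eq_zero_of_lattice (p := X j - X i) (q := Y j - Y i) (r := X k - X i)
      (s := Y k - Y i) ?_ ?_ ?_ ?_ (by linarith) (by linarith)
      (fun h => h5 (hinj _ _ ⟨by linarith [h.1], by linarith [h.2]⟩))
    all_goals simp [latticePoint_zero, latticePoint_one]
  · rfl

/-- The number of bonds of the configuration filling a strip of width `a` row by row. -/
lemma card_bonds_le (n a : ℕ) (hn : 1 ≤ n) :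
    (4 * n : ℝ) - 2 * a - 2 - 2 * ((n - 1) / a : ℕ) ≤
      ∑ i ∈ Finset.range n, ∑ j ∈ Finset.range n,
        (((if j = i + a then 1 else 0) + (if i = j + a then 1 else 0)) +
          ((if j = i + 1 ∧ ¬ a ∣ j then 1 else 0) +
            (if i = j + 1 ∧ ¬ a ∣ i then 1 else 0)) : ℝ) := by
  have h1 : ((n : ℝ) - a) ≤ ∑ i ∈ Finset.range n, ∑ j ∈ Finset.range n,
      (if j = i + a then 1 else 0 : ℝ) := by
    simp only [Finset.sum_ite_eq', Finset.mem_range]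
    rw [← Finset.sum_filter, Finset.sum_const, nsmul_eq_mul, mul_one, sub_le_iff_le_add]
    have : (Finset.range (n - a)).card ≤ ((Finset.range n).filter fun i => i + a < n).card := by
      refine Finset.card_le_card fun i hi => ?_
      simp only [Finset.mem_range, Finset.mem_filter] at hi ⊢
      omega
    rw [Finset.card_range] at this
    exact_mod_cast (by omega : n ≤ ((Finset.range n).filter fun i => i + a < n).card + a)
  have h2 : ((n : ℝ) - 1 - ((n - 1) / a : ℕ)) ≤ ∑ i ∈ Finset.range n, ∑ j ∈ Finset.range n,
      (if j = i + 1 ∧ ¬ a ∣ j then 1 else 0 : ℝ) := by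
    have e : ∀ i ∈ Finset.range n, (if i + 1 < n ∧ ¬ a ∣ i + 1 then 1 else 0 : ℝ) ≤
        ∑ j ∈ Finset.range n, (if j = i + 1 ∧ ¬ a ∣ j then 1 else 0 : ℝ) := by
      intro i _
      split_ifs with h
      · refine le_trans ?_ (Finset.single_le_sum (fun j _ => ?_) (Finset.mem_range.2 h.1))
        · rw [if_pos ⟨rfl, h.2⟩]
        · split_ifs <;> norm_num
      · exact Finset.sum_nonneg fun j _ => by split_ifs <;> norm_num
    refine le_trans ?_ (Finset.sum_le_sum e)
    rw [← Finset.sum_filter, Finset.sum_const, nsmul_eq_mul, mul_one]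
    have hm := Nat.card_multiples (n - 1) a
    have hf := Finset.card_filter_add_card_filter_not (s := Finset.range (n - 1))
      (fun e => a ∣ e + 1)
    have hsub : ((Finset.range (n - 1)).filter fun e => ¬ a ∣ e + 1).card ≤
        ((Finset.range n).filter fun i => i + 1 < n ∧ ¬ a ∣ i + 1).card := by
      refine Finset.card_le_card fun i hi => ?_
      simp only [Finset.mem_range, Finset.mem_filter] at hi ⊢
      exact ⟨by omega, by omega, hi.2⟩
    rw [hm, Finset.card_range] at hf
    rw [sub_sub, sub_le_iff_le_add]
    have : n ≤ ((Finset.range n).filter fun i => i + 1 < n ∧ ¬ a ∣ i + 1).card +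
      (1 + (n - 1) / a) := by omega
    exact_mod_cast this
  simp only [Finset.sum_add_distrib]
  rw [Finset.sum_comm (f := fun i j => (if i = j + a then 1 else 0 : ℝ)),
    Finset.sum_comm (f := fun i j => (if i = j + 1 ∧ ¬ a ∣ i then 1 else 0 : ℝ))]
  linarith

/-- The square-like configuration is a competitor of low energy. -/
theorem exists_competitor (h2 : V2Hyp ε r0 v2) (h3 : V3Hyp ε v3) (hr : r0 < Real.sqrt 2)
    (hn : 1 ≤ n) : ∃ y : Fin n → Pt, Function.Injective y ∧
      (∀ i j, j ≠ i → v2 (dist (y i) (y j)) ≠ ⊤) ∧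
      ∀ N : ℕ, 4 * n ≤ N ^ 2 → realEnergy r0 v2 v3 y ≤ N - 2 * n := by
  obtain ⟨a, ha, hbound⟩ : ∃ a : ℕ, 0 < a ∧ ∀ N : ℕ, 4 * n ≤ N ^ 2 →
      a + 1 + (n - 1) / a ≤ N := by
    refine ⟨Nat.sqrt (n - 1) + 1, Nat.succ_pos _, fun N hN => ?_⟩
    have hs := Nat.sqrt_le (n - 1)
    have hs' := Nat.lt_succ_sqrt (n - 1)
    set s := Nat.sqrt (n - 1)
    obtain ⟨m, rfl⟩ : ∃ m, n = m + 1 := ⟨n - 1, by omega⟩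
    rw [Nat.add_sub_cancel] at *
    by_cases h : m < s * (s + 1)
    · have h4 : m / (s + 1) < s := (Nat.div_lt_iff_lt_mul (Nat.succ_pos s)).2 h
      have h5 : 2 * s < N := by
        by_contra h6
        nlinarith
      omega
    · have h4 : m / (s + 1) < s + 1 := (Nat.div_lt_iff_lt_mul (Nat.succ_pos s)).2 hs'
      have h5 : 2 * s + 1 < N := by
        by_contra h6
        nlinarith
      omega
  let X : Fin n → ℤ := fun i => ((i : ℕ) % a : ℕ)
  let Y : Fin n → ℤ := fun i => ((i : ℕ) / a : ℕ)
  have hinj : ∀ i j, X i = X j ∧ Y i = Y j → i = j := by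
    rintro i j ⟨h, h'⟩
    simp only [X, Y, Nat.cast_inj] at h h'
    rw [Fin.ext_iff, ← Nat.div_add_mod (i : ℕ) a, ← Nat.div_add_mod (j : ℕ) a, h, h']
  have hv : ∀ i j, j ≠ i → v2 (dist (latticePoint (X i) (Y i)) (latticePoint (X j) (Y j))) =
      (((if (X i - X j) ^ 2 + (Y i - Y j) ^ 2 = 1 then -1 else 0 : ℝ)) : EReal) := fun i j hij =>
    v2_lattice h2 hr fun h => hij (hinj i j h).symm
  refine ⟨fun i => latticePoint (X i) (Y i), fun i j h => hinj i j ?_, fun i j hij => ?_, ?_⟩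
  · have h0 := congrArg (fun p : Pt => p 0) h
    have h1 := congrArg (fun p : Pt => p 1) h
    simp only [latticePoint_zero, latticePoint_one, Int.cast_inj] at h0 h1
    exact ⟨h0, h1⟩
  · simp only
    rw [hv i j hij]
    exact EReal.coe_ne_top _
  · intro N hN
    have hunit : ∀ i j : Fin n, ((j : ℕ) = i + a ∨ ((j : ℕ) = i + 1 ∧ ¬ a ∣ (j : ℕ))) →
        (X i - X j) ^ 2 + (Y i - Y j) ^ 2 = 1 := by
      rintro i j (h | ⟨h, h'⟩)
      · simp only [X, Y, h, Nat.add_mod_right, Nat.add_div_right _ ha]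
        push_cast
        ring
      · have hd : (j : ℕ) / a = i / a := by
          rw [h, Nat.succ_div, if_neg (by rwa [← h]), add_zero]
        have e1 := Nat.div_add_mod (i : ℕ) a
        have e2 := Nat.div_add_mod (j : ℕ) a
        rw [hd] at e2
        have hm : (j : ℕ) % a = i % a + 1 := by omega
        simp only [X, Y, hd, hm]
        push_cast
        ring
    have hpair : ∀ i j, pairEnergy v2 (fun i => latticePoint (X i) (Y i)) i j ≤
        -(((if (j : ℕ) = i + a then 1 else 0) + (if (i : ℕ) = j + a then 1 else 0)) +
          ((if (j : ℕ) = i + 1 ∧ ¬ a ∣ (j : ℕ) then 1 else 0) +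
            (if (i : ℕ) = j + 1 ∧ ¬ a ∣ (i : ℕ) then 1 else 0)) : ℝ) := by
      intro i j
      have hv0 : pairEnergy v2 (fun i => latticePoint (X i) (Y i)) i j ≤ 0 := by
        unfold pairEnergy
        split_ifs with hij
        · rw [hv i j hij, EReal.toReal_coe]
          split_ifs <;> norm_num
        · exact le_rfl
      have hv1 : (X i - X j) ^ 2 + (Y i - Y j) ^ 2 = 1 →
          pairEnergy v2 (fun i => latticePoint (X i) (Y i)) i j = -1 := fun h => by
        have hij : j ≠ i := by rintro rfl; simp at h
        unfold pairEnergy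
        rw [if_pos hij, hv i j hij, EReal.toReal_coe, if_pos h]
      have hsymm : (X i - X j) ^ 2 + (Y i - Y j) ^ 2 = (X j - X i) ^ 2 + (Y j - Y i) ^ 2 := by ring
      by_cases c1 : (j : ℕ) = i + a ∨ ((j : ℕ) = i + 1 ∧ ¬ a ∣ (j : ℕ))
      · rw [hv1 (hunit i j c1), if_neg (by omega : ¬ (i : ℕ) = j + a),
          if_neg (by omega : ¬ ((i : ℕ) = j + 1 ∧ ¬ a ∣ (i : ℕ)))]
        by_cases c : (j : ℕ) = i + a
        · rw [if_pos c, if_neg]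
          · norm_num
          · rintro ⟨h, h'⟩
            exact h' ((by omega : 1 = a) ▸ one_dvd _)
        · rw [if_neg c]
          split_ifs <;> norm_num
      · rw [not_or] at c1
        rw [if_neg c1.1, if_neg c1.2]
        by_cases c2 : (i : ℕ) = j + a ∨ ((i : ℕ) = j + 1 ∧ ¬ a ∣ (i : ℕ))
        · rw [hv1 (hsymm.trans (hunit j i c2))]
          by_cases c : (i : ℕ) = j + a
          · rw [if_pos c, if_neg]
            · norm_num
            · rintro ⟨h, h'⟩
              exact h' ((by omega : 1 = a) ▸ one_dvd _)
          · rw [if_neg c]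
            split_ifs <;> norm_num
        · rw [not_or] at c2
          rw [if_neg c2.1, if_neg c2.2]
          linarith
    have hsum := Finset.sum_le_sum fun i (_ : i ∈ Finset.univ) =>
      Finset.sum_le_sum fun j (_ : j ∈ Finset.univ) => hpair i j
    have hb := card_bonds_le n a hn
    have hNa : ((a + 1 + (n - 1) / a : ℕ) : ℝ) ≤ N := by exact_mod_cast hbound N hN
    simp only [← Fin.sum_univ_eq_sum_range] at hb
    unfold realEnergy
    simp only [angleEnergy_lattice h3 hr hinj, Finset.sum_const_zero, mul_zero, add_zero]
    simp only [Finset.sum_neg_distrib] at hsum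
    push_cast at hNa hb
    linarith

end

open Classical in
/-- In a minimizer all bonds have unit length, all angles are multiples of `π / 2`, and the number
of bonds is maximal. -/
theorem IsMinimizer.exact {n : ℕ} {ε r0 : ℝ} {v2 : ℝ → EReal} {v3 : ℝ → ℝ} {x : Fin n → Pt}
    (hx : IsMinimizer r0 v2 v3 x) (h2 : V2Hyp ε r0 v2) (h3 : V3Hyp ε v3) (hε : 0 < ε)
    (hε' : ε < 1 / 100) (hr : r0 < Real.sqrt 2) (hn : 1 ≤ n) :
    (∀ i j, Bonded r0 x i j → dist (x i) (x j) = 1) ∧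
    (∀ i j k, Bonded r0 x i j → Bonded r0 x i k → j ≠ k →
      dot (dir (toC (x i)) (toC (x j))) (dir (toC (x i)) (toC (x k))) = 0 ∨
        dir (toC (x i)) (toC (x j)) + dir (toC (x i)) (toC (x k)) = 0) ∧
    ∀ N : ℕ, 4 * n ≤ N ^ 2 →
      4 * n ≤ (Finset.univ.filter fun d : Fin n × Fin n => Bonded r0 x d.1 d.2).card + 2 * N := by
  obtain ⟨y, hy, hyt, hyE⟩ := exists_competitor h2 h3 hr hn
  have hxt := hx.ne_top h2 hy hyt
  have hmin := hx.2 y hy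
  rw [energy_eq_coe h2 hxt, energy_eq_coe h2 hyt, EReal.coe_le_coe_iff] at hmin
  have hr2 : r0 < 2 := hr.trans ((Real.sqrt_lt' (by norm_num)).2 (by norm_num))
  set D : Finset (Fin n × Fin n) := Finset.univ.filter fun d => Bonded r0 x d.1 d.2 with hD
  obtain ⟨N, hN, hNb⟩ := exists_card_adj_le (toC_injective.comp hx.1) (adj := Bonded r0 x)
    (fun i j h => h.symm) (fun i h => h.1 rfl)
    (fun i j k hj hk hjk => (hx.goodPair h2 h3 hε hε' hr2 hxt hj hk hjk).1)
    (angleEnergy r0 v3 x) (angleEnergy_nonneg h3) (angleEnergy_comm h3)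
    (fun i j k hj hk hjk => (hx.goodPair h2 h3 hε hε' hr2 hxt hj hk hjk).2)
  rw [Fintype.card_fin] at hN hNb
  set f : Fin n × Fin n → ℝ := fun d =>
    pairEnergy v2 x d.1 d.2 + if Bonded r0 x d.1 d.2 then 1 else 0 with hf
  have hf0 : ∀ d, 0 ≤ f d := fun d => by
    simp only [hf]
    split_ifs with h
    · linarith [neg_one_le_pairEnergy h2 hxt d.1 d.2]
    · rw [pairEnergy_of_not_bonded h2 h, add_zero]
  have hsum : ∑ d, f d = ∑ i, ∑ j, pairEnergy v2 x i j + D.card := by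
    simp only [hf]
    rw [Finset.sum_add_distrib, Fintype.sum_prod_type, ← Finset.sum_filter, Finset.sum_const,
      nsmul_eq_mul, mul_one]
  have hE : realEnergy r0 v2 v3 x = 1 / 2 * ∑ i, ∑ j, pairEnergy v2 x i j +
    1 / 2 * ∑ i, ∑ j, ∑ k, angleEnergy r0 v3 x i j k := rfl
  set V := ∑ i, ∑ j, ∑ k, angleEnergy r0 v3 x i j k with hV
  have hN' := hyE N hN
  have hVn : 0 ≤ V := Finset.sum_nonneg fun i _ => Finset.sum_nonneg fun j _ =>
    Finset.sum_nonneg fun k _ => angleEnergy_nonneg h3 i j k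
  have hfn : 0 ≤ ∑ d, f d := Finset.sum_nonneg fun d _ => hf0 d
  have hV0 : V ≤ 0 := by linarith
  have hfs0 : ∑ d, f d = 0 := by linarith
  refine ⟨fun i j hij => ?_, fun i j k hj hk hjk => ?_, fun M hM => ?_⟩
  · have h := (Finset.sum_eq_zero_iff_of_nonneg fun d _ => hf0 d).1 hfs0 (i, j)
      (Finset.mem_univ _)
    simp only [hf, if_pos hij] at h
    exact dist_eq_one_of_pairEnergy h2 hxt (by linarith)
  · refine h3.dot_eq_zero_or (hx.1.ne hj.1) (hx.1.ne hk.1) ?_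
    rw [← angleEnergy_of_bonded (v3 := v3) hj hk hjk]
    refine le_trans ?_ hV0
    refine (Finset.single_le_sum (f := fun k => angleEnergy r0 v3 x i j k)
      (fun k _ => angleEnergy_nonneg h3 i j k) (Finset.mem_univ k)).trans ?_
    refine (Finset.single_le_sum (f := fun j => ∑ k, angleEnergy r0 v3 x i j k)
      (fun j _ => Finset.sum_nonneg fun k _ => angleEnergy_nonneg h3 i j k)
      (Finset.mem_univ j)).trans ?_
    exact Finset.single_le_sum (f := fun i => ∑ j, ∑ k, angleEnergy r0 v3 x i j k)
      (fun i _ => Finset.sum_nonneg fun j _ => Finset.sum_nonneg fun k _ =>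
        angleEnergy_nonneg h3 i j k) (Finset.mem_univ i)
  · have := hyE M hM
    have h4 : (4 * n : ℝ) ≤ D.card + 2 * M := by linarith
    exact_mod_cast h4

/-! ### Exact configurations are subsets of a lattice -/

/-- Configurations all of whose bonds have unit length and meet at multiples of a right angle, and
that have as many bonds as possible. -/
structure IsExact {ι : Type*} [Fintype ι] (z : ι → ℂ) (adj : ι → ι → Prop) : Prop where
  injective : Function.Injective z
  symm : ∀ i j, adj i j → adj j i
  irrefl : ∀ i, ¬ adj i i
  norm_sub : ∀ i j, adj i j → ‖z j - z i‖ = 1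
  angle : ∀ i j k, adj i j → adj i k → j ≠ k →
    dot (dir (z i) (z j)) (dir (z i) (z k)) = 0 ∨ dir (z i) (z j) + dir (z i) (z k) = 0
  card_le : ∀ N : ℕ, 4 * Fintype.card ι ≤ N ^ 2 →
    4 * Fintype.card ι ≤ Nat.card {d : ι × ι // adj d.1 d.2} + 2 * N

namespace IsExact

variable {ι : Type*} [Fintype ι] {z : ι → ℂ} {adj : ι → ι → Prop}

lemma dir_eq (h : IsExact z adj) {i j : ι} (hij : adj i j) : dir (z i) (z j) = z j - z i := by
  rw [dir, h.norm_sub i j hij]; simp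

lemma exists_card_subtype (h : IsExact z adj) (p : ι → Prop) :
    ∃ N : ℕ, 4 * Nat.card {i // p i} ≤ N ^ 2 ∧
      Nat.card {d : ι × ι // (adj d.1 d.2 ∧ p d.1) ∧ p d.2} + 2 * N ≤ 4 * Nat.card {i // p i} := by
  classical
  have hne : ∀ i j, adj i j → z i ≠ z j := fun i j hij h' =>
    h.irrefl i (by rw [← h.injective h'] at hij; exact hij)
  obtain ⟨N, hN, hb⟩ := exists_card_adj_le (ι := {i // p i}) (z := fun i => z i)
    (adj := fun i j => adj i j) (h.injective.comp Subtype.val_injective)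
    (fun i j => h.symm i j) (fun i => h.irrefl i)
    (fun i j k hj hk hjk => by
      rcases h.angle i j k hj hk (Subtype.val_injective.ne hjk) with h0 | h0
      · left; rw [h0]; norm_num
      · right; rw [h0]; norm_num)
    (fun _ _ _ => 0) (fun _ _ _ => le_rfl) (fun _ _ _ => rfl)
    (fun i j k hj hk hjk hs => by
      have hu := norm_dir (hne i j hj)
      have hv := norm_dir (hne i k hk)
      rcases h.angle i j k hj hk (Subtype.val_injective.ne hjk) with h0 | h0
      · have := sq_norm_add hu hv
        rw [h0] at this
        nlinarith [norm_nonneg (dir (z i) (z j) + dir (z i) (z k))]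
      · rw [eq_neg_of_add_eq_zero_left h0]; simp)
  rw [← Nat.card_eq_fintype_card] at hN hb
  refine ⟨N, hN, ?_⟩
  have hc : (Finset.univ.filter fun d : {i // p i} × {i // p i} => adj d.1 d.2).card =
      Nat.card {d : ι × ι // (adj d.1 d.2 ∧ p d.1) ∧ p d.2} := by
    rw [← Fintype.card_subtype, ← Nat.card_eq_fintype_card]
    exact Nat.card_congr
      { toFun := fun d => ⟨(d.1.1, d.1.2), ⟨d.2, d.1.1.2⟩, d.1.2.2⟩
        invFun := fun d => ⟨(⟨d.1.1, d.2.1.2⟩, ⟨d.1.2, d.2.2⟩), d.2.1.1⟩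
        left_inv := fun _ => rfl
        right_inv := fun _ => rfl }
  rw [hc] at hb
  simp only [Finset.sum_const_zero, mul_zero, add_zero] at hb
  exact_mod_cast hb

/-- Exact configurations are connected. -/
lemma connected (h : IsExact z adj) {p : ι → Prop} (hp : ∀ i j, adj i j → p i → p j) {i : ι}
    (hi : p i) (j : ι) : p j := by
  classical
  by_contra hj
  obtain ⟨P, hP, hbP⟩ := h.exists_card_subtype p
  obtain ⟨Q, hQ, hbQ⟩ := h.exists_card_subtype fun i => ¬ p i
  have hP1 : 0 < Nat.card {i // p i} := Nat.card_pos_iff.2 ⟨⟨⟨i, hi⟩⟩, inferInstance⟩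
  have hQ1 : 0 < Nat.card {i // ¬ p i} := Nat.card_pos_iff.2 ⟨⟨⟨j, hj⟩⟩, inferInstance⟩
  have hn : Nat.card {i // p i} + Nat.card {i // ¬ p i} = Fintype.card ι := by
    rw [Nat.card_eq_fintype_card, Nat.card_eq_fintype_card, Fintype.card_subtype_compl]
    have := Fintype.card_subtype_le p
    omega
  have hd : Nat.card {d : ι × ι // adj d.1 d.2} =
      Nat.card {d : ι × ι // (adj d.1 d.2 ∧ p d.1) ∧ p d.2} +
        Nat.card {d : ι × ι // (adj d.1 d.2 ∧ ¬ p d.1) ∧ ¬ p d.2} := by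
    simp only [Nat.card_eq_fintype_card, Fintype.card_subtype]
    rw [← Finset.card_union_of_disjoint]
    · congr 1
      ext d
      simp only [Finset.mem_filter, Finset.mem_univ, true_and, Finset.mem_union]
      constructor
      · intro hd
        by_cases h1 : p d.1
        · exact Or.inl ⟨⟨hd, h1⟩, hp _ _ hd h1⟩
        · exact Or.inr ⟨⟨hd, h1⟩, fun h2 => h1 (hp _ _ (h.symm _ _ hd) h2)⟩
      · rintro (h1 | h1)
        · exact h1.1.1
        · exact h1.1.1
    · rw [Finset.disjoint_filter]
      exact fun d _ h1 h2 => h2.2 h1.2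
  have hP2 : 2 ≤ P := by
    by_contra h2
    nlinarith
  have hQ2 : 2 ≤ Q := by
    by_contra h2
    nlinarith
  obtain ⟨P, rfl⟩ : ∃ P', P = P' + 1 := ⟨P - 1, by omega⟩
  have hN := h.card_le (P + Q) (by nlinarith)
  omega

/-- A unit vector that is perpendicular or opposite to one of the four directions of the square
lattice spanned by `u` is one of these directions. -/
lemma eq_lattice_direction {u w v : ℂ} (hu : ‖u‖ = 1) (hv : ‖v‖ = 1)
    (hw : w = u ∨ w = -u ∨ w = u * Complex.I ∨ w = -(u * Complex.I))
    (h : dot w v = 0 ∨ w + v = 0) :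
    v = u ∨ v = -u ∨ v = u * Complex.I ∨ v = -(u * Complex.I) := by
  have hw1 : ‖w‖ = 1 := by rcases hw with rfl | rfl | rfl | rfl <;> simp [hu]
  rcases h with h | h
  · have key : v = w * Complex.I ∨ v = -(w * Complex.I) := by
      have e1 := re_sq_add_im_sq hw1
      have e2 := re_sq_add_im_sq hv
      unfold dot at h
      set s := w.re * v.im - w.im * v.re with hs
      have hs2 : s ^ 2 = 1 := by
        have : s ^ 2 + (w.re * v.re + w.im * v.im) ^ 2 =
          (w.re ^ 2 + w.im ^ 2) * (v.re ^ 2 + v.im ^ 2) := by rw [hs]; ring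
        rw [h, e1, e2] at this
        linarith
      have hre : v.re = -w.im * s := by
        rw [hs]
        linear_combination (-v.re) * e1 + w.re * h
      have him : v.im = w.re * s := by
        rw [hs]
        linear_combination (-v.im) * e1 + w.im * h
      rcases eq_or_eq_neg_of_sq_eq_sq s 1 (by rw [hs2, one_pow]) with h1 | h1
      · left; rw [h1] at hre him
        apply Complex.ext <;> simp [hre, him]
      · right; rw [h1] at hre him
        apply Complex.ext <;> simp [hre, him]
    have hII : ∀ t : ℂ, t * Complex.I * Complex.I = -t := fun t => by
      rw [mul_assoc, Complex.I_mul_I, mul_neg_one]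
    rcases hw with rfl | rfl | rfl | rfl <;> rcases key with rfl | rfl <;>
      simp [hII, neg_mul]
  · rw [eq_neg_of_add_eq_zero_right h]
    rcases hw with rfl | rfl | rfl | rfl <;> simp

/-- Exact configurations are subsets of a square lattice. -/
lemma exists_lattice [Nonempty ι] (h : IsExact z adj) :
    ∃ (u c : ℂ) (X Y : ι → ℤ), ‖u‖ = 1 ∧ ∀ i, z i = c + u * (X i + Y i * Complex.I) := by
  classical
  obtain ⟨i0⟩ := ‹Nonempty ι›
  obtain ⟨u, hu, hu0⟩ : ∃ u : ℂ, ‖u‖ = 1 ∧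
      ∀ j, adj i0 j → ∃ k, adj i0 k ∧ dir (z i0) (z k) = u := by
    by_cases hex : ∃ k, adj i0 k
    · obtain ⟨k, hk⟩ := hex
      exact ⟨dir (z i0) (z k), by rw [h.dir_eq hk, h.norm_sub _ _ hk], fun j _ => ⟨k, hk, rfl⟩⟩
    · exact ⟨1, by simp, fun j hj => absurd ⟨j, hj⟩ hex⟩
  have hdir : ∀ {i j}, adj i j → ‖dir (z i) (z j)‖ = 1 := fun hij => by
    rw [h.dir_eq hij, h.norm_sub _ _ hij]
  have key := h.connected (p := fun i => (∃ a b : ℤ, z i = z i0 + u * (a + b * Complex.I)) ∧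
      ∀ j, adj i j → (dir (z i) (z j) = u ∨ dir (z i) (z j) = -u ∨
        dir (z i) (z j) = u * Complex.I ∨ dir (z i) (z j) = -(u * Complex.I))) (i := i0) ?_ ?_
  · choose X Y hXY using fun i => (key i).1
    exact ⟨u, z i0, X, Y, hu, hXY⟩
  · rintro i j hij ⟨⟨a, b, hab⟩, hd⟩
    have hij' := hd j hij
    refine ⟨?_, fun k hk => ?_⟩
    · have hz : z j = z i + dir (z i) (z j) := by rw [h.dir_eq hij]; ring
      rw [hz]
      rcases hij' with e | e | e | e <;> rw [e, hab]
      · exact ⟨a + 1, b, by push_cast; ring⟩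
      · exact ⟨a - 1, b, by push_cast; ring⟩
      · exact ⟨a, b + 1, by push_cast; ring⟩
      · exact ⟨a, b - 1, by push_cast; ring⟩
    · have hji : dir (z j) (z i) = u ∨ dir (z j) (z i) = -u ∨
          dir (z j) (z i) = u * Complex.I ∨ dir (z j) (z i) = -(u * Complex.I) := by
        rw [dir_swap]
        rcases hij' with e | e | e | e <;> rw [e] <;> simp
      by_cases hik : i = k
      · rw [← hik]; exact hji
      · exact eq_lattice_direction hu (hdir hk) hji (h.angle j i k (h.symm _ _ hij) hk hik)
  · refine ⟨⟨0, 0, by simp⟩, fun j hj => ?_⟩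
    obtain ⟨k, hk, hku⟩ := hu0 j hj
    by_cases hkj : k = j
    · rw [← hkj]; exact Or.inl hku
    · exact eq_lattice_direction hu (hdir hj) (Or.inl hku) (h.angle _ _ _ hk hj hkj)

end IsExact

/-- In a planar set of lattice points, the number of horizontal bonds plus the number of rows is at
most the number of points. -/
lemma card_steps_add_card_image_le {ι : Type*} [Fintype ι] [DecidableEq ι] (f g : ι → ℤ)
    (hinj : ∀ i j, f i = f j → g i = g j → i = j) :
    (Finset.univ.filter fun d : ι × ι => f d.2 = f d.1 + 1 ∧ g d.2 = g d.1).card +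
      (Finset.univ.image g).card ≤ Fintype.card ι := by
  classical
  let D : Finset (ι × ι) := Finset.univ.filter fun d => f d.2 = f d.1 + 1 ∧ g d.2 = g d.1
  have hD : ∀ d, d ∈ D ↔ f d.2 = f d.1 + 1 ∧ g d.2 = g d.1 := by simp [D]
  let M : Finset ι := Finset.univ.filter fun i => ∀ j, g j = g i → f j ≤ f i
  have hM : ∀ i, i ∈ M ↔ ∀ j, g j = g i → f j ≤ f i := by simp [M]
  have h1 : (D.image Prod.fst).card = D.card := by
    refine Finset.card_image_of_injOn fun d hd d' hd' h => ?_
    have e := (hD d).1 hd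
    have e' := (hD d').1 hd'
    have h' : d.1 = d'.1 := h
    rw [h'] at e
    exact Prod.ext h' (hinj _ _ (e.1.trans e'.1.symm) (e.2.trans e'.2.symm))
  have h2 : (Finset.univ.image g).card ≤ M.card := by
    refine (Finset.card_le_card ?_).trans (Finset.card_image_le (s := M) (f := g))
    intro b hb
    obtain ⟨i, -, rfl⟩ := Finset.mem_image.1 hb
    obtain ⟨k, hk, hmax⟩ := Finset.exists_max_image (Finset.univ.filter fun j => g j = g i) f
      ⟨i, by simp⟩
    simp only [Finset.mem_filter, Finset.mem_univ, true_and] at hk hmax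
    exact Finset.mem_image.2 ⟨k, (hM k).2 fun j hj => hmax j (hj.trans hk), hk⟩
  have h3 : Disjoint (D.image Prod.fst) M := by
    rw [Finset.disjoint_left]
    intro i hi hiM
    obtain ⟨d, hd, rfl⟩ := Finset.mem_image.1 hi
    have e := (hD d).1 hd
    have := (hM _).1 hiM d.2 e.2
    omega
  calc D.card + (Finset.univ.image g).card ≤ (D.image Prod.fst).card + M.card := by omega
    _ = (D.image Prod.fst ∪ M).card := (Finset.card_union_of_disjoint h3).symm
    _ ≤ Fintype.card ι := Finset.card_le_univ _

namespace IsExact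

variable {ι : Type*} [Fintype ι] {z : ι → ℂ} {adj : ι → ι → Prop}

/-- A coordinate that changes by at most one along bonds takes an interval of values. -/
lemma exists_shift [Nonempty ι] (h : IsExact z adj) (X : ι → ℤ)
    (hX : ∀ i j, adj i j → X j ≤ X i + 1) :
    ∃ m : ℤ, ∀ i, 1 ≤ X i - m ∧ X i - m ≤ (Finset.univ.image X).card := by
  obtain ⟨a, -, ha⟩ := Finset.exists_min_image Finset.univ X Finset.univ_nonempty
  obtain ⟨b, -, hb⟩ := Finset.exists_max_image Finset.univ X Finset.univ_nonempty
  have hsub : Finset.Icc (X a) (X b) ⊆ Finset.univ.image X := by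
    intro m hm
    rw [Finset.mem_Icc] at hm
    by_contra hne
    have hne' : ∀ k, X k ≠ m := fun k hk => hne (Finset.mem_image.2 ⟨k, Finset.mem_univ _, hk⟩)
    have := h.connected (p := fun i => X i < m) (i := a)
      (fun i j hij hi => lt_of_le_of_ne (by have := hX i j hij; omega) (hne' j))
      (lt_of_le_of_ne hm.1 (hne' a)) b
    omega
  have hcard := Finset.card_le_card hsub
  rw [Int.card_Icc] at hcard
  refine ⟨X a - 1, fun i => ?_⟩
  have h1 := ha i (Finset.mem_univ i)
  have h2 := hb i (Finset.mem_univ i)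
  omega

/-- Exact configurations fit into a rectangle of small perimeter. -/
theorem exists_rectangle [Nonempty ι] (h : IsExact z adj) :
    ∃ (u c : ℂ) (X Y : ι → ℤ) (p q : ℕ), ‖u‖ = 1 ∧
      (∀ i, z i = c + u * (X i + Y i * Complex.I)) ∧
      (∀ i, (1 ≤ X i ∧ X i ≤ p) ∧ 1 ≤ Y i ∧ Y i ≤ q) ∧ Fintype.card ι ≤ p * q ∧
      ∀ N : ℕ, 4 * Fintype.card ι ≤ N ^ 2 → p + q ≤ N := by
  classical
  obtain ⟨u, c, X, Y, hu, hz⟩ := h.exists_lattice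
  have hinj : ∀ i j, X i = X j → Y i = Y j → i = j := fun i j h1 h2 =>
    h.injective (by rw [hz i, hz j, h1, h2])
  have hadj : ∀ i j, adj i j → (X j - X i) ^ 2 + (Y j - Y i) ^ 2 = 1 := by
    intro i j hij
    have h1 := h.norm_sub i j hij
    rw [hz i, hz j, show c + u * (X j + Y j * Complex.I) - (c + u * (X i + Y i * Complex.I)) =
      u * (((X j - X i : ℤ) : ℝ) + ((Y j - Y i : ℤ) : ℝ) * Complex.I) by push_cast; ring,
      norm_mul, hu, one_mul] at h1
    have h2 := sq_norm_eq ((((X j - X i : ℤ) : ℝ) : ℂ) + ((Y j - Y i : ℤ) : ℝ) * Complex.I)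
    rw [h1] at h2
    simp only [Complex.add_re, Complex.add_im, Complex.re_ofReal_mul, Complex.im_ofReal_mul,
      Complex.I_re, Complex.I_im, Complex.ofReal_re, Complex.ofReal_im, mul_zero, mul_one,
      add_zero, zero_add, one_pow] at h2
    exact_mod_cast h2.symm
  have hunit := fun i j hij => Int.eq_unit_of_sq_add_sq_eq_one (hadj i j hij)
  obtain ⟨m, hm⟩ := h.exists_shift X fun i j hij => by have := hunit i j hij; omega
  obtain ⟨l, hl⟩ := h.exists_shift Y fun i j hij => by have := hunit i j hij; omega
  refine ⟨u, c + u * (m + l * Complex.I), fun i => X i - m, fun i => Y i - l,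
    (Finset.univ.image X).card, (Finset.univ.image Y).card, hu, fun i => ?_,
    fun i => ⟨hm i, hl i⟩, ?_, fun N hN => ?_⟩
  · rw [hz i]
    push_cast
    ring
  · rw [← Finset.card_product, ← Finset.card_univ]
    refine Finset.card_le_card_of_injOn (fun i => (X i, Y i)) (fun i _ => by simp)
      fun i _ j _ hij => ?_
    exact hinj i j (Prod.mk.inj hij).1 (Prod.mk.inj hij).2
  · have hb := h.card_le N hN
    have c1 := card_steps_add_card_image_le X Y hinj
    have c2 := card_steps_add_card_image_le (fun i => -X i) Y
      (fun i j h1 h2 => hinj i j (neg_inj.1 h1) h2)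
    have c3 := card_steps_add_card_image_le Y X (fun i j h1 h2 => hinj i j h2 h1)
    have c4 := card_steps_add_card_image_le (fun i => -Y i) X
      (fun i j h1 h2 => hinj i j h2 (neg_inj.1 h1))
    have hD : Nat.card {d : ι × ι // adj d.1 d.2} ≤
        ((Finset.univ.filter fun d : ι × ι => X d.2 = X d.1 + 1 ∧ Y d.2 = Y d.1).card +
          (Finset.univ.filter fun d : ι × ι => -X d.2 = -X d.1 + 1 ∧ Y d.2 = Y d.1).card) +
        ((Finset.univ.filter fun d : ι × ι => Y d.2 = Y d.1 + 1 ∧ X d.2 = X d.1).card +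
          (Finset.univ.filter fun d : ι × ι => -Y d.2 = -Y d.1 + 1 ∧ X d.2 = X d.1).card) := by
      rw [Nat.card_eq_fintype_card, Fintype.card_subtype]
      refine (Finset.card_le_card ?_).trans ((Finset.card_union_le _ _).trans
        (Nat.add_le_add (Finset.card_union_le _ _) (Finset.card_union_le _ _)))
      intro d hd
      simp only [Finset.mem_filter, Finset.mem_univ, true_and, Finset.mem_union] at hd ⊢
      have := hunit d.1 d.2 hd
      omega
    omega

end IsExact

/-! ### Comparison with the square -/

lemma IsMinimizer.isExact {n : ℕ} {ε r0 : ℝ} {v2 : ℝ → EReal} {v3 : ℝ → ℝ} {x : Fin n → Pt}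
    (hx : IsMinimizer r0 v2 v3 x) (h2 : V2Hyp ε r0 v2) (h3 : V3Hyp ε v3) (hε : 0 < ε)
    (hε' : ε < 1 / 100) (hr : r0 < Real.sqrt 2) (hn : 1 ≤ n) :
    IsExact (fun i => toC (x i)) (Bonded r0 x) := by
  classical
  obtain ⟨hd, ha, hc⟩ := hx.exact h2 h3 hε hε' hr hn
  refine ⟨toC_injective.comp hx.1, fun _ _ h => h.symm, fun _ h => h.1 rfl,
    fun i j h => (norm_toC_sub _ _).trans (hd i j h), ha, fun N hN => ?_⟩
  rw [Fintype.card_fin] at hN ⊢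
  rw [Nat.card_eq_fintype_card, Fintype.card_subtype]
  convert hc N hN

/-- The rigid motion of the plane that inverts `w ↦ c + u * w`. -/
lemma exists_isometryEquiv {u : ℂ} (hu : ‖u‖ = 1) (c : ℂ) :
    ∃ R : Pt ≃ᵢ Pt, ∀ p q, toC p = c + u * toC q → R p = q := by
  have huu : (starRingEnd ℂ) u * u = 1 := by
    rw [mul_comm, Complex.mul_conj, Complex.normSq_eq_norm_sq, hu]; simp
  let ofC : ℂ → Pt := fun z => !₂[z.re, z.im]
  have hof : ∀ z, toC (ofC z) = z := fun z => rfl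
  refine ⟨IsometryEquiv.mk' (fun p => ofC ((starRingEnd ℂ) u * (toC p - c)))
    (fun q => ofC (c + u * toC q)) (fun q => ?_) ?_, fun p q h => ?_⟩
  · apply toC_injective
    rw [hof, hof, add_sub_cancel_left, ← mul_assoc, huu, one_mul]
  · refine Isometry.of_dist_eq fun p q => ?_
    rw [← norm_toC_sub, ← norm_toC_sub, hof, hof, ← mul_sub, norm_mul, RCLike.norm_conj, hu,
      one_mul, sub_sub_sub_cancel_right]
  · apply toC_injective
    change (starRingEnd ℂ) u * (toC p - c) = toC q
    rw [h, add_sub_cancel_left, ← mul_assoc, huu, one_mul]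

/-- A rectangle with area at least `t ^ 4` and nearly minimal semiperimeter has sides close to
`t ^ 2`. -/
lemma side_le {t p q : ℝ} (ht : 1 ≤ t) (hpq : p + q < 2 * t ^ 2 + 1) (hp : 0 ≤ p) (hq : 0 ≤ q)
    (h : t ^ 4 ≤ p * q) : p ≤ t ^ 2 + 2 * t := by
  have h1 : (p - q) ^ 2 ≤ (2 * t + 1) ^ 2 := by
    have : (p + q) ^ 2 ≤ (2 * t ^ 2 + 1) ^ 2 := pow_le_pow_left₀ (by positivity) hpq.le 2
    nlinarith
  have := abs_le_of_sq_le_sq h1 (by positivity)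
  linarith [le_of_abs_le this]

/-- A subset of such a rectangle with `t ^ 4` points differs from a square by `O(t ^ 3)` points. -/
lemma card_symmDiff_square_le {t : ℝ} (ht : 1 ≤ t) {p q m : ℕ} {T : Finset (ℤ × ℤ)}
    (hT : T ⊆ Finset.Icc 1 (p : ℤ) ×ˢ Finset.Icc 1 (q : ℤ)) (hcard : (T.card : ℝ) = t ^ 4)
    (hpq : (p + q : ℝ) < 2 * t ^ 2 + 1) (hm : t ^ 2 ≤ m) (hm' : (m : ℝ) < t ^ 2 + 1) :
    ((symmDiff T (Finset.Icc 1 (m : ℤ) ×ˢ Finset.Icc 1 (m : ℤ))).card : ℝ) ≤ 27 * t ^ 3 := by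
  set S := Finset.Icc 1 (m : ℤ) ×ˢ Finset.Icc 1 (m : ℤ) with hS
  have hScard : S.card = m * m := by simp [hS]
  have harea : t ^ 4 ≤ p * q := by
    rw [← hcard]
    have := Finset.card_le_card hT
    simp only [Finset.card_product, Int.card_Icc, add_sub_cancel_right, Int.toNat_natCast] at this
    exact_mod_cast this
  have hp : (p : ℝ) ≤ t ^ 2 + 2 * t := side_le ht hpq p.cast_nonneg q.cast_nonneg harea
  have hq : (q : ℝ) ≤ t ^ 2 + 2 * t :=
    side_le ht (by linarith) q.cast_nonneg p.cast_nonneg (by linarith [mul_comm (p : ℝ) q])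
  have hex : ∀ k : ℕ, (k : ℝ) ≤ t ^ 2 + 2 * t → ((k - m : ℕ) : ℝ) ≤ 2 * t := by
    intro k hk
    rcases le_total m k with h | h
    · rw [Nat.cast_sub h]; linarith
    · rw [Nat.sub_eq_zero_of_le h]; push_cast; linarith
  have hsub : T \ S ⊆ Finset.Ioc (m : ℤ) p ×ˢ Finset.Icc 1 (q : ℤ) ∪
      Finset.Icc 1 (p : ℤ) ×ˢ Finset.Ioc (m : ℤ) q := by
    intro d hd
    obtain ⟨hd1, hd2⟩ := Finset.mem_sdiff.1 hd
    have hd3 := hT hd1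
    simp only [hS, Finset.mem_product, Finset.mem_Icc, Finset.mem_union, Finset.mem_Ioc]
      at hd2 hd3 ⊢
    omega
  have hTS : ((T \ S).card : ℝ) ≤ 12 * t ^ 3 := by
    have h1 := (Finset.card_le_card hsub).trans (Finset.card_union_le _ _)
    simp only [Finset.card_product, Int.card_Icc, Int.card_Ioc, add_sub_cancel_right,
      Int.toNat_natCast, Int.toNat_sub] at h1
    have h2 : ((T \ S).card : ℝ) ≤ (p - m : ℕ) * q + p * (q - m : ℕ) := by exact_mod_cast h1
    have ht2 : t ^ 2 + 2 * t ≤ 3 * t ^ 2 := by nlinarith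
    have h3 : ((p - m : ℕ) : ℝ) * q ≤ 2 * t * (3 * t ^ 2) :=
      mul_le_mul (hex p hp) (hq.trans ht2) (by positivity) (by positivity)
    have h4 : (p : ℝ) * (q - m : ℕ) ≤ 3 * t ^ 2 * (2 * t) :=
      mul_le_mul (hp.trans ht2) (hex q hq) (by positivity) (by positivity)
    nlinarith
  have hST : ((S \ T).card : ℝ) = m * m - t ^ 4 + (T \ S).card := by
    have h1 := Finset.card_sdiff_add_card_inter S T
    have h2 := Finset.card_sdiff_add_card_inter T S
    rw [Finset.inter_comm T S] at h2
    rw [hScard] at h1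
    have h1' : ((S \ T).card : ℝ) + (S ∩ T).card = m * m := by exact_mod_cast h1
    have h2' : ((T \ S).card : ℝ) + (S ∩ T).card = t ^ 4 := by rw [← hcard]; exact_mod_cast h2
    linarith
  have hmm : (m : ℝ) * m - t ^ 4 ≤ 3 * t ^ 3 := by
    have h1 : (m : ℝ) * m ≤ (t ^ 2 + 1) * (t ^ 2 + 1) := by gcongr
    nlinarith [pow_le_pow_right₀ ht (show 2 ≤ 3 by norm_num), one_le_pow₀ ht (n := 3)]
  have hle : ((symmDiff T S).card : ℝ) ≤ (T \ S).card + (S \ T).card := by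
    exact_mod_cast Finset.card_union_le (T \ S) (S \ T)
  linarith

lemma mem_Sn {n : ℕ} {p : Pt} : p ∈ Sn n ↔ ∃ a b : ℤ, (1 ≤ a ∧ a ≤ ⌈Real.sqrt n⌉₊) ∧
    (1 ≤ b ∧ b ≤ ⌈Real.sqrt n⌉₊) ∧ latticePoint a b = p := by
  rw [Int.natCast_ceil_eq_ceil (Real.sqrt_nonneg _)]
  refine exists_congr fun a => exists_congr fun b => ?_
  have : latticePoint a b = p ↔ p 0 = a ∧ p 1 = b := by
    constructor
    · rintro rfl; exact ⟨rfl, rfl⟩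
    · rintro ⟨h0, h1⟩
      exact toC_injective (Complex.ext h0.symm h1.symm)
  rw [this]
  tauto

open scoped symmDiff in
theorem exists_isometryEquiv_ncard_le {n : ℕ} (hn : 1 ≤ n) {r0 : ℝ} {x : Fin n → Pt}
    (h : IsExact (fun i => toC (x i)) (Bonded r0 x)) :
    ∃ R : Pt ≃ᵢ Pt,
      (((R '' Set.range x) ∆ Sn n).ncard : ℝ) ≤ 27 * (n : ℝ) ^ ((3 : ℝ) / 4) := by
  classical
  have : Nonempty (Fin n) := ⟨⟨0, hn⟩⟩
  obtain ⟨u, c, X, Y, p, q, hu, hz, hXY, -, hN⟩ := h.exists_rectangle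
  obtain ⟨R, hR⟩ := exists_isometryEquiv hu c
  have hRx : ∀ i, R (x i) = latticePoint (X i) (Y i) := fun i =>
    hR _ _ ((hz i).trans (by
      congr 2
      apply Complex.ext <;> simp [toC, latticePoint_zero, latticePoint_one]))
  refine ⟨R, ?_⟩
  let t : ℝ := (n : ℝ) ^ ((1 : ℝ) / 4)
  have hn' : (1 : ℝ) ≤ n := by exact_mod_cast hn
  have ht : 1 ≤ t := Real.one_le_rpow hn' (by norm_num)
  have hpow : ∀ k : ℕ, t ^ k = (n : ℝ) ^ ((k : ℝ) / 4) := fun k => by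
    rw [← Real.rpow_natCast, ← Real.rpow_mul (by positivity)]; congr 1; ring
  have ht4 : t ^ 4 = n := by rw [hpow]; norm_num
  have ht2 : t ^ 2 = Real.sqrt n := by rw [hpow, Real.sqrt_eq_rpow]; norm_num
  have ht3 : t ^ 3 = (n : ℝ) ^ ((3 : ℝ) / 4) := by rw [hpow]; norm_num
  let T : Finset (ℤ × ℤ) := Finset.univ.image fun i => (X i, Y i)
  have hTcard : T.card = n := by
    rw [Finset.card_image_of_injective, Finset.card_univ, Fintype.card_fin]
    intro i j hij
    obtain ⟨h1, h2⟩ := Prod.mk.inj hij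
    exact h.injective (by simp only [hz, h1, h2])
  have hTsub : T ⊆ Finset.Icc 1 (p : ℤ) ×ˢ Finset.Icc 1 (q : ℤ) := by
    refine Finset.image_subset_iff.2 fun i _ => ?_
    simpa using hXY i
  have hpq : (p + q : ℝ) < 2 * t ^ 2 + 1 := by
    have h1 : 4 * Fintype.card (Fin n) ≤ ⌈2 * t ^ 2⌉₊ ^ 2 := by
      rw [Fintype.card_fin]
      have h2 : (2 * t ^ 2) ^ 2 ≤ (⌈2 * t ^ 2⌉₊ : ℝ) ^ 2 :=
        pow_le_pow_left₀ (by positivity) (Nat.le_ceil _) 2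
      have h3 : (4 * n : ℝ) ≤ (⌈2 * t ^ 2⌉₊ : ℝ) ^ 2 := by rw [← ht4]; linarith
      exact_mod_cast h3
    have h2 : (p + q : ℝ) ≤ ⌈2 * t ^ 2⌉₊ := by exact_mod_cast hN _ h1
    exact h2.trans_lt (Nat.ceil_lt_add_one (by positivity))
  have hmain := card_symmDiff_square_le ht (m := ⌈Real.sqrt n⌉₊) hTsub (by rw [hTcard, ht4]) hpq
    (ht2 ▸ Nat.le_ceil _) (ht2 ▸ Nat.ceil_lt_add_one (by positivity))
  rw [← ht3]
  refine le_trans ?_ hmain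
  set S := Finset.Icc 1 (⌈Real.sqrt n⌉₊ : ℤ) ×ˢ Finset.Icc 1 (⌈Real.sqrt n⌉₊ : ℤ) with hS
  have himT : ∀ y, y ∈ R '' Set.range x ↔ ∃ d ∈ T, latticePoint d.1 d.2 = y := by
    intro y
    simp [T, hRx]
  have himS : ∀ y, y ∈ Sn n ↔ ∃ d ∈ S, latticePoint d.1 d.2 = y := by
    intro y
    rw [mem_Sn]
    simp [hS, and_assoc]
  have hsub : (R '' Set.range x) ∆ Sn n ⊆
      (((symmDiff T S).image fun d => latticePoint d.1 d.2 : Finset Pt) : Set Pt) := by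
    intro y hy
    rw [Finset.mem_coe, Finset.mem_image]
    rw [Set.mem_symmDiff, himT, himS] at hy
    simp only [Finset.mem_symmDiff]
    grind
  have := (Set.ncard_le_ncard hsub (Finset.finite_toSet _)).trans_eq (Set.ncard_coe_finset _)
  exact_mod_cast this.trans Finset.card_image_le

/-- **The `n^{3/4}`-law.** Ground states differ from the square Wulff shape `S_n` by at most
`c·n^{3/4}` points, up to a rigid motion. -/
theorem n_three_quarters_law :
    ∃ ε₀ : ℝ, 0 < ε₀ ∧ ε₀ < π / 6 ∧ ∃ c : ℝ, 0 < c ∧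
      ∀ ε : ℝ, 0 < ε → ε < ε₀ →
      ∀ r0 : ℝ, 1 < r0 → r0 < Real.sqrt 2 →
      ∀ (v2 : ℝ → EReal) (v3 : ℝ → ℝ), V2Hyp ε r0 v2 → V3Hyp ε v3 →
      ∀ n : ℕ, 1 ≤ n → ∀ x : Fin n → Pt, IsMinimizer r0 v2 v3 x →
      ∃ R : Pt ≃ᵢ Pt,
        (((R '' Set.range x) ∆ Sn n).ncard : ℝ) ≤ c * (n : ℝ) ^ ((3 : ℝ) / 4) := by
  refine ⟨1 / 100, by norm_num, by linarith [Real.pi_gt_three], 27, by norm_num, ?_⟩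
  intro ε hε hε' r0 _ hr v2 v3 h2 h3 n hn x hx
  exact exists_isometryEquiv_ncard_le hn (hx.isExact h2 h3 hε hε' hr hn)

end
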